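/- arXiv:0906.3873 — 7 statements merged into one kernel-verified Lean document; each statement's English description precedes it below -/
import Mathlib

section
/- Let G be a finite connected simple graph in which every vertex has degree 2 or 3, and suppose G has an even number of edges. Let n be the number of vertices of G of degree 3 (n is even by the handshake lemma). Then the number of perfect matchings of the line graph L(G) equals 2^(n/2 + 1). -/
/-!
A perfect matching of `L(G)` pairs up the edges of `G` so that the edges of a pair share an
endpoint, which is unique because `G` is simple. Directing every edge towards the vertex it
shares with its partner gives an orientation of `G` with all in-degrees even. As degrees are at most `3`,
an even in-degree is `0` or `2`, so the orientation determines the matching, and perfect matchings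
of `L(G)` correspond bijectively to orientations with all in-degrees even
(`ncard_evenOrient_eq_numPM`).

Relative to a reference orientation, such orientations are the solutions `x : E → 𝔽₂` of `A x = b`,
where `A` is the incidence map of `G` over `𝔽₂` and `b` lists the in-degrees of the reference
orientation (`ncard_evenOrient_eq_ncard_solutions`). For connected `G` the range of `A` consists of
the vectors with coordinate sum `0` (`range_inc`). The coordinate sum of `b` is `|E|`, which is even,
so solutions exist and their number is `|ker A| = 2 ^ (|E| - |V| + 1)`. Finally
`2 |E| = 2 |V| + n` by the handshake lemma.
-/

open SimpleGraph

/-- The number of perfect matchings of a simple graph `G`. -/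
noncomputable def numPM {V : Type*} (G : SimpleGraph V) : ℕ :=
  Set.ncard {M : G.Subgraph | M.IsPerfectMatching}

namespace LineGraphPM

/-! ### The incidence map over the field with two elements -/

section Linear

variable {V E : Type*} [DecidableEq V] [Fintype E]

/-- The incidence map over `𝔽₂` of the multigraph with vertex set `V` and edge set `E` in which the
edge `e` joins `t e` and `s e`: it sends a set of edges to the vector of its degrees modulo `2`. -/
def inc (t s : E → V) : (E → ZMod 2) →ₗ[ZMod 2] (V → ZMod 2) where
  toFun x v := ∑ e, x e * ((if t e = v then 1 else 0) + (if s e = v then 1 else 0))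
  map_add' x y := by
    ext v; simp [add_mul, Finset.sum_add_distrib]
  map_smul' c x := by
    ext v; simp [Finset.mul_sum, mul_assoc]

/-- The sum of the coordinates of a vector over `𝔽₂`, as a linear functional. -/
def total (V : Type*) [Fintype V] : (V → ZMod 2) →ₗ[ZMod 2] ZMod 2 where
  toFun y := ∑ v, y v
  map_add' x y := by simp [Finset.sum_add_distrib]
  map_smul' c x := by simp [Finset.mul_sum]

lemma inc_single [DecidableEq E] (t s : E → V) (e : E) :
    inc t s (Pi.single e 1) = Pi.single (t e) 1 + Pi.single (s e) 1 := by
  ext v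
  simp only [inc, LinearMap.coe_mk, AddHom.coe_mk, Pi.add_apply, Pi.single_apply, ite_mul,
    one_mul, zero_mul, Finset.sum_ite_eq', Finset.mem_univ, if_true]
  simp [eq_comm]

variable [Fintype V]

/-- By connectedness `single u + single w` lies in the range for any `u`, `w`; these vectors span
the vectors of coordinate sum `0`. -/
lemma range_inc (G : SimpleGraph V) (hG : G.Connected) (t s : E → V)
    (hE : ∀ u v, G.Adj u v → ∃ e, (t e = u ∧ s e = v) ∨ (t e = v ∧ s e = u)) :
    LinearMap.range (inc t s) = LinearMap.ker (total V) := by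
  classical
  apply le_antisymm
  · rintro _ ⟨x, rfl⟩
    rw [LinearMap.mem_ker]
    simp only [total, inc, LinearMap.coe_mk, AddHom.coe_mk]
    rw [Finset.sum_comm]
    refine Finset.sum_eq_zero fun e _ => ?_
    rw [← Finset.mul_sum, Finset.sum_add_distrib]
    simp [CharTwo.add_self_eq_zero]
  · have hself : ∀ y : V → ZMod 2, y + y = 0 := fun y => funext fun v => CharTwo.add_self_eq_zero _
    have hwalk : ∀ u w, G.Reachable u w →
        (Pi.single u 1 + Pi.single w 1 : V → ZMod 2) ∈ LinearMap.range (inc t s) := by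
      rintro u w ⟨p⟩
      induction p with
      | nil => rw [hself]; exact zero_mem _
      | @cons a b c hab _ ih =>
        have h1 : (Pi.single a 1 + Pi.single b 1 : V → ZMod 2) ∈ LinearMap.range (inc t s) := by
          obtain ⟨e, ⟨h, h'⟩ | ⟨h, h'⟩⟩ := hE a b hab
          · exact ⟨Pi.single e 1, by rw [inc_single, h, h']⟩
          · exact ⟨Pi.single e 1, by rw [inc_single, h, h', add_comm]⟩
        have h2 := add_mem h1 ih
        rwa [add_assoc, ← add_assoc (Pi.single b 1), hself, zero_add] at h2
    intro y hy
    obtain ⟨v₀⟩ := hG.nonempty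
    have hy' : ∑ v, y v = 0 := hy
    have : y = ∑ v, y v • (Pi.single v 1 + Pi.single v₀ 1 : V → ZMod 2) := by
      simp only [smul_add, Finset.sum_add_distrib]
      rw [← Finset.sum_smul, hy', zero_smul, add_zero]
      ext w
      simp [Finset.sum_apply, Pi.single_apply]
    rw [this]
    exact sum_mem fun v _ => Submodule.smul_mem _ _ (hwalk v v₀ (hG.preconnected v v₀))

/-- The solution set is a coset of `ker (inc t s)`, whose dimension is `|E| - |V| + 1` by
rank-nullity; `|V|` is moved to the left to avoid truncated subtraction. -/
lemma ncard_solutions (G : SimpleGraph V) (hG : G.Connected) (t s : E → V)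
    (hE : ∀ u v, G.Adj u v → ∃ e, (t e = u ∧ s e = v) ∨ (t e = v ∧ s e = u))
    (b : V → ZMod 2) (hb : ∑ v, b v = 0) :
    {x | inc t s x = b}.ncard * 2 ^ Fintype.card V = 2 ^ (Fintype.card E + 1) := by
  classical
  have hr := range_inc G hG t s hE
  obtain ⟨x₀, hx₀⟩ : b ∈ LinearMap.range (inc t s) := by rw [hr]; exact hb
  have hset : {x | inc t s x = b} = (· + x₀) '' (LinearMap.ker (inc t s) : Set (E → ZMod 2)) := by
    ext x
    simp only [Set.mem_ofPred_eq, Set.mem_image, SetLike.mem_coe, LinearMap.mem_ker]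
    constructor
    · intro h
      exact ⟨x - x₀, by rw [map_sub, h, hx₀, sub_self], by simp⟩
    · rintro ⟨y, hy, rfl⟩
      rw [map_add, hy, hx₀, zero_add]
  have hker : (LinearMap.ker (inc t s) : Set (E → ZMod 2)).ncard
      = 2 ^ Module.finrank (ZMod 2) (LinearMap.ker (inc t s)) := by
    have := Module.natCard_eq_pow_finrank (K := ZMod 2) (V := LinearMap.ker (inc t s))
    rw [Nat.card_zmod] at this
    exact this
  have hd1 := LinearMap.finrank_range_add_finrank_ker (inc t s)
  have hd2 := LinearMap.finrank_range_add_finrank_ker (total V)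
  have hsurj : LinearMap.range (total V) = ⊤ := by
    rw [LinearMap.range_eq_top]
    obtain ⟨v₀⟩ := hG.nonempty
    exact fun c => ⟨Pi.single v₀ c, by simp [total]⟩
  rw [hr] at hd1
  rw [hsurj, finrank_top, Module.finrank_self] at hd2
  simp only [Module.finrank_fintype_fun_eq_card] at hd1 hd2
  rw [hset, Set.ncard_image_of_injective _ (add_left_injective x₀), hker, ← pow_add]
  congr 1
  omega

end Linear

/-! ### Orientations with even in-degrees and perfect matchings of the line graph -/

section Orient

/-- Distinct edges of a simple graph share at most one endpoint. -/
lemma eq_of_mem_of_mem {V : Type*} (G : SimpleGraph V) {e f : G.edgeSet} (hef : e ≠ f)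
    {u v : V} (hue : u ∈ e.1) (huf : u ∈ f.1)
    (hve : v ∈ e.1) (hvf : v ∈ f.1) : u = v := by
  by_contra huv
  exact hef (Subtype.ext (((Sym2.mem_and_mem_iff huv).1 ⟨hue, hve⟩).trans
    ((Sym2.mem_and_mem_iff huv).1 ⟨huf, hvf⟩).symm))

variable {V : Type*} [Fintype V] [DecidableEq V] (G : SimpleGraph V) [DecidableRel G.Adj]

/-- The orientations of `G` with all in-degrees even. An orientation is encoded by the map sending
each edge to its head. -/
def evenOrient : Set (G.edgeSet → V) :=
  {o | (∀ e, o e ∈ e.1) ∧ ∀ v, ∑ e, (if o e = v then (1 : ZMod 2) else 0) = 0}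

/-- Relative to the reference orientation with heads `t` and tails `s`, the orientation
corresponding to `x` reverses the edges on which `x` is `1`. -/
lemma ncard_evenOrient_eq_ncard_solutions (t s : G.edgeSet → V)
    (hts : ∀ e : G.edgeSet, e.1 = s(t e, s e)) :
    (evenOrient G).ncard =
      {x | inc t s x = fun v => ∑ e, (if t e = v then (1 : ZMod 2) else 0)}.ncard := by
  have hne : ∀ e, t e ≠ s e := fun e h => by
    have h1 := e.2
    rw [hts e, SimpleGraph.mem_edgeSet, h] at h1
    exact G.loopless.irrefl _ h1
  have h01 : ∀ a : ZMod 2, a = 0 ∨ a = 1 := by decide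
  set F : (G.edgeSet → ZMod 2) → (G.edgeSet → V) := fun x e => if x e = 0 then t e else s e with hF
  have hinj : Function.Injective F := by
    intro x y hxy
    ext e
    have := congrFun hxy e
    have h1 := hne e
    simp only [hF] at this
    rcases h01 (x e) with hx | hx <;> rcases h01 (y e) with hy | hy <;>
      simp [hx, hy, h1, h1.symm] at this ⊢
  have hsum : ∀ x v, ∑ e, (if F x e = v then (1 : ZMod 2) else 0) =
      ∑ e, (if t e = v then (1 : ZMod 2) else 0) + inc t s x v := by
    intro x v
    simp only [inc, LinearMap.coe_mk, AddHom.coe_mk]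
    rw [← Finset.sum_add_distrib]
    refine Finset.sum_congr rfl fun e _ => ?_
    rcases h01 (x e) with hx | hx
    · simp [hF, hx]
    · simp only [hF, hx, one_ne_zero, if_false, one_mul]
      rw [← add_assoc, CharTwo.add_self_eq_zero, zero_add]
  rw [← Set.ncard_image_of_injective _ hinj]
  congr 1
  ext o
  simp only [evenOrient, Set.mem_ofPred_eq, Set.mem_image]
  constructor
  · rintro ⟨ho, hev⟩
    have hFo : F (fun e => if o e = t e then 0 else 1) = o := by
      ext e
      have h1 := ho e
      rw [hts e, Sym2.mem_iff] at h1
      have h2 := hne e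
      rcases h1 with h | h <;> simp [hF, h, h2.symm]
    refine ⟨_, ?_, hFo⟩
    ext v
    have h3 := hsum (fun e => if o e = t e then 0 else 1) v
    rw [hFo, hev v] at h3
    exact (CharTwo.add_eq_zero.1 h3.symm).symm
  · rintro ⟨x, hx, rfl⟩
    refine ⟨fun e => ?_, fun v => ?_⟩
    · rw [hts e, Sym2.mem_iff]
      rcases h01 (x e) with h | h <;> simp [hF, h]
    · rw [hsum, hx, CharTwo.add_self_eq_zero]

/-- The subgraph of `L(G)` joining distinct edges of `G` with the same head. -/
def toSub (o : G.edgeSet → V) (ho : ∀ e, o e ∈ e.1) : G.lineGraph.Subgraph where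
  verts := Set.univ
  Adj e f := e ≠ f ∧ o e = o f
  adj_sub {e f} h := ⟨h.1, o e, ho e, h.2 ▸ ho f⟩
  edge_vert _ := Set.mem_univ _
  symm := ⟨fun _ _ h => ⟨h.1.symm, h.2.symm⟩⟩

/-- The in-degree of the head of `e` is positive, even and at most `3`, hence equal to `2`. -/
lemma existsUnique_partner (hdeg : ∀ v, G.degree v ≤ 3) {o : G.edgeSet → V}
    (ho : o ∈ evenOrient G) (e : G.edgeSet) : ∃! f, e ≠ f ∧ o e = o f := by
  obtain ⟨hmem, hev⟩ := ho
  set S : Finset G.edgeSet := Finset.univ.filter fun f => o f = o e with hS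
  have hSe : e ∈ S := by simp [hS]
  have heven : Even S.card := by
    have := hev (o e)
    rw [Finset.sum_boole] at this
    exact (ZMod.natCast_eq_zero_iff_even).1 this
  have hle : S.card ≤ 3 := by
    refine le_trans ?_ (hdeg (o e))
    rw [← SimpleGraph.card_incidenceFinset_eq_degree,
      ← Finset.card_image_of_injective S Subtype.val_injective]
    refine Finset.card_le_card fun x hx => ?_
    obtain ⟨f, hf, rfl⟩ := Finset.mem_image.1 hx
    rw [SimpleGraph.mem_incidenceFinset]
    refine ⟨f.2, ?_⟩
    have : o f = o e := by simpa [hS] using hf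
    exact this ▸ hmem f
  have hpos : 0 < S.card := Finset.card_pos.2 ⟨e, hSe⟩
  have h2 : S.card = 2 := by
    obtain ⟨k, hk⟩ := heven
    omega
  have h1 : (S.erase e).card = 1 := by rw [Finset.card_erase_of_mem hSe, h2]
  obtain ⟨f, hf⟩ := Finset.card_eq_one.1 h1
  have key : ∀ g, (e ≠ g ∧ o e = o g) ↔ g = f := by
    intro g
    rw [← Finset.mem_singleton (a := f), ← hf]
    simp [hS, eq_comm]
  exact ⟨f, (key f).2 rfl, fun g hg => (key g).1 hg⟩

lemma toSub_isPerfectMatching (hdeg : ∀ v, G.degree v ≤ 3) {o : G.edgeSet → V}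
    (ho : o ∈ evenOrient G) : (toSub G o ho.1).IsPerfectMatching :=
  ⟨fun {e} _ => existsUnique_partner G hdeg ho e, fun _ => Set.mem_univ _⟩

/-- Conversely to `toSub`, a perfect matching of `L(G)` directs each edge towards the vertex it
shares with its partner. -/
lemma ncard_evenOrient_eq_numPM (hdeg : ∀ v, G.degree v ≤ 3) :
    (evenOrient G).ncard = numPM G.lineGraph := by
  classical
  unfold numPM
  refine Set.ncard_congr (fun o ho => toSub G o ho.1)
    (fun o ho => toSub_isPerfectMatching G hdeg ho) ?_ ?_
  · intro o o' ho ho' h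
    ext e
    obtain ⟨f, ⟨hne, hf⟩, -⟩ := existsUnique_partner G hdeg ho e
    have h1 : (toSub G o ho.1).Adj e f := ⟨hne, hf⟩
    rw [h] at h1
    exact eq_of_mem_of_mem G hne (ho.1 e) (hf ▸ ho.1 f) (ho'.1 e) (h1.2 ▸ ho'.1 f)
  · rintro M ⟨hM, hspan⟩
    choose p hp hpu using fun e => hM (hspan e)
    have hadj : ∀ e, e ≠ p e ∧ ∃ v, v ∈ e.1 ∧ v ∈ (p e).1 := fun e => M.adj_sub (hp e)
    choose o hoe hop using fun e => (hadj e).2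
    have hpp : ∀ e, p (p e) = e := fun e => (hpu (p e) e (hp e).symm).symm
    have hopp : ∀ e, o (p e) = o e := fun e => by
      refine eq_of_mem_of_mem G (hadj e).1 ?_ (hoe (p e)) (hoe e) (hop e)
      have := hop (p e)
      rwa [hpp] at this
    have ho : o ∈ evenOrient G := by
      refine ⟨hoe, fun v => ?_⟩
      -- The partner map is a fixed-point-free involution preserving heads.
      refine Finset.sum_involution (fun e _ => p e) (fun e _ => ?_) (fun e _ _ => (hadj e).1.symm)
        (fun e _ => Finset.mem_univ _) (fun e _ => hpp e)
      rw [hopp, CharTwo.add_self_eq_zero]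
    refine ⟨o, ho, ?_⟩
    apply SimpleGraph.Subgraph.ext
    · exact (Set.eq_univ_of_forall hspan).symm
    · ext e f
      constructor
      · intro h
        have hu := (existsUnique_partner G hdeg ho e).unique h ⟨(hadj e).1, (hopp e).symm⟩
        rw [hu]
        exact hp e
      · intro h
        rw [hpu e f h]
        exact ⟨(hadj e).1, (hopp e).symm⟩

end Orient

end LineGraphPM

open LineGraphPM in
/-- Let `G` be a finite connected simple graph in which every vertex has degree 2 or 3,
with an even number of edges, and let `n` be the number of vertices of degree 3.
Then the number of perfect matchings of the line graph `L(G)` is `2 ^ (n / 2 + 1)`. -/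
theorem perfectMatchings_lineGraph_of_degree_two_or_three
    {V : Type*} [Fintype V] [DecidableEq V] (G : SimpleGraph V) [DecidableRel G.Adj]
    (hconn : G.Connected)
    (hdeg : ∀ v : V, G.degree v = 2 ∨ G.degree v = 3)
    (heven : Even G.edgeFinset.card)
    (n : ℕ) (hn : n = (Finset.univ.filter fun v : V => G.degree v = 3).card) :
    numPM G.lineGraph = 2 ^ (n / 2 + 1) := by
  have hdeg3 : ∀ v, G.degree v ≤ 3 := fun v => by have := hdeg v; omega
  have hex : ∀ e : G.edgeSet, ∃ p : V × V, e.1 = s(p.1, p.2) := fun e =>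
    ⟨Quot.out e.1, (Quot.out_eq e.1).symm⟩
  choose q hq using hex
  have hE : ∀ u v, G.Adj u v → ∃ e : G.edgeSet,
      ((q e).1 = u ∧ (q e).2 = v) ∨ ((q e).1 = v ∧ (q e).2 = u) := by
    intro u v huv
    refine ⟨⟨s(u, v), huv⟩, ?_⟩
    have := hq ⟨s(u, v), huv⟩
    rw [Sym2.eq_iff] at this
    rcases this with ⟨h, h'⟩ | ⟨h, h'⟩
    · exact Or.inl ⟨h.symm, h'.symm⟩
    · exact Or.inr ⟨h'.symm, h.symm⟩
  have hcard : Fintype.card G.edgeSet = G.edgeFinset.card := (SimpleGraph.edgeFinset_card).symm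
  have hb : ∑ v, ∑ e, (if (q e).1 = v then (1 : ZMod 2) else 0) = 0 := by
    rw [Finset.sum_comm]
    simp only [Finset.sum_ite_eq, Finset.mem_univ, if_true, Finset.sum_const, Finset.card_univ,
      nsmul_eq_mul, mul_one]
    rw [hcard]
    exact (ZMod.natCast_eq_zero_iff_even).2 heven
  have hcount := ncard_solutions G hconn (fun e => (q e).1) (fun e => (q e).2) hE _ hb
  rw [← ncard_evenOrient_eq_ncard_solutions G _ _ hq, ncard_evenOrient_eq_numPM G hdeg3] at hcount
  have hshake : 2 * Fintype.card V + n = 2 * G.edgeFinset.card := by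
    rw [← SimpleGraph.sum_degrees_eq_twice_card_edges, hn, Finset.card_filter, mul_comm,
      ← smul_eq_mul, ← Finset.card_univ, ← Finset.sum_const, ← Finset.sum_add_distrib]
    refine Finset.sum_congr rfl fun v _ => ?_
    rcases hdeg v with h | h <;> simp [h]
  have hexp : Fintype.card G.edgeSet + 1 = (n / 2 + 1) + Fintype.card V := by omega
  rw [hexp, pow_add] at hcount
  exact Nat.eq_of_mul_eq_mul_right (by positivity) hcount
end

section
/- Let G be a finite connected cubic (3-regular) simple graph with ν vertices and an even number of edges (equivalently, ν ≡ 0 (mod 4), since |E(G)| = 3ν/2). Then the number of perfect matchings of the line graph L(G) equals 2^(ν/2 + 1). -/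
/-!
Two distinct edges of a simple graph share at most one vertex, so a perfect matching of `L(G)`
sends every edge `e` of `G` to the unique endpoint it shares with its mate. In a cubic graph no
vertex can serve two matched pairs, since this would need four incident edges. Hence the perfect
matchings of `L(G)` correspond to the orientations of `G` (choices of a head for each edge) in which
every in-degree is even, that is `0` or `2` (`setOf_isPerfectMatching_eq_image`).

Relative to a fixed orientation, orientations are vectors `x` in `𝔽₂^E`, and the in-degrees modulo
`2` are `c + B x`, where `B` is the incidence map `𝔽₂^E → 𝔽₂^V` and `c` the in-degree vector of the
fixed orientation (`sum_single_hd`). As `G` is connected, the range of `B` is the hyperplane of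
vectors with coordinate sum `0` (`range_bdry`). It contains `c` because `|E|` is even, so the
orientations in question form a coset of `ker B`, which has dimension `|E| - (ν - 1) = ν / 2 + 1`.
-/

open SimpleGraph

namespace CubicLineGraph

variable {V : Type*} [Fintype V] [DecidableEq V] {G : SimpleGraph V} [DecidableRel G.Adj]

/-! ### Orientations as vectors over `𝔽₂` -/

/-- The head of `e` in an arbitrarily chosen reference orientation. -/
noncomputable def fst (e : G.edgeSet) : V := (Quot.out (e : Sym2 V)).1

/-- The tail of `e` in the reference orientation. -/
noncomputable def snd (e : G.edgeSet) : V := (Quot.out (e : Sym2 V)).2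

omit [Fintype V] [DecidableEq V] [DecidableRel G.Adj] in
lemma edge_eq (e : G.edgeSet) : (e : Sym2 V) = s(fst e, snd e) :=
  (Quot.out_eq (e : Sym2 V)).symm

omit [Fintype V] [DecidableEq V] [DecidableRel G.Adj] in
lemma fst_ne_snd (e : G.edgeSet) : fst e ≠ snd e := by
  have h := e.2
  rw [edge_eq e, mem_edgeSet] at h
  exact h.ne

omit [Fintype V] [DecidableEq V] [DecidableRel G.Adj] in
lemma common_unique {e e' : G.edgeSet} (hne : e ≠ e') {u v : V}
    (hu : u ∈ (e : Sym2 V)) (hu' : u ∈ (e' : Sym2 V))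
    (hv : v ∈ (e : Sym2 V)) (hv' : v ∈ (e' : Sym2 V)) : u = v := by
  by_contra h
  exact hne (Subtype.ext (((Sym2.mem_and_mem_iff h).1 ⟨hu, hv⟩).trans
    ((Sym2.mem_and_mem_iff h).1 ⟨hu', hv'⟩).symm))

/-- The head of `e` in the orientation encoded by `x`: the edges with `x e ≠ 0` are those reversed
with respect to the reference orientation. -/
noncomputable def hd (x : G.edgeSet → ZMod 2) (e : G.edgeSet) : V :=
  if x e = 0 then fst e else snd e

omit [Fintype V] [DecidableEq V] [DecidableRel G.Adj] in
lemma hd_mem (x : G.edgeSet → ZMod 2) (e : G.edgeSet) : hd x e ∈ (e : Sym2 V) := by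
  rw [edge_eq e, hd]
  split_ifs <;> simp

omit [Fintype V] [DecidableEq V] [DecidableRel G.Adj] in
lemma hd_injective : Function.Injective (hd (G := G)) := by
  intro x y h
  ext1 e
  have h1 := congrFun h e
  have := fst_ne_snd e
  have h01 : ∀ a b : ZMod 2, (a = 0 ↔ b = 0) → a = b := by decide
  apply h01
  unfold hd at h1
  split_ifs at h1 <;> simp_all

omit [Fintype V] [DecidableEq V] [DecidableRel G.Adj] in
/-- Every choice of an endpoint for each edge is encoded by some vector. -/
lemma exists_hd_eq (f : G.edgeSet → V) (hf : ∀ e : G.edgeSet, f e ∈ (e : Sym2 V)) :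
    ∃ x, hd x = f := by
  classical
  refine ⟨fun e => if f e = fst e then 0 else 1, funext fun e => ?_⟩
  have h := hf e
  rw [edge_eq e, Sym2.mem_iff] at h
  unfold hd
  by_cases h1 : f e = fst e
  · simp [h1]
  · simp [h.resolve_left h1, (fst_ne_snd e).symm]

/-! ### Perfect matchings and orientations with even in-degrees -/

/-- The spanning subgraph of `L(G)` joining two distinct edges when the orientation `x` gives them
the same head. -/
def matchingOf (x : G.edgeSet → ZMod 2) : G.lineGraph.Subgraph where
  verts := Set.univ
  Adj e e' := e ≠ e' ∧ hd x e = hd x e'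
  adj_sub := by
    rintro e e' ⟨hne, h⟩
    exact lineGraph_adj_iff_exists.2 ⟨hne, hd x e, hd_mem x e, h ▸ hd_mem x e'⟩
  edge_vert _ := Set.mem_univ _
  symm := ⟨fun _ _ h => ⟨h.1.symm, h.2.symm⟩⟩

lemma card_incident_le (hcubic : ∀ v : V, G.degree v = 3) (v : V) (s : Finset G.edgeSet)
    (hs : ∀ e ∈ s, v ∈ (e : Sym2 V)) : s.card ≤ 3 := by
  rw [← hcubic v, ← card_incidenceFinset_eq_degree, ← Finset.card_map (Function.Embedding.subtype _)]
  apply Finset.card_le_card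
  intro e he
  obtain ⟨e', he', rfl⟩ := Finset.mem_map.1 he
  rw [mem_incidenceFinset]
  exact ⟨e'.2, hs e' he'⟩

/-- In a cubic graph an even in-degree is `0` or `2`, and with in-degree `2` the two edges entering
a vertex are each other's only possible mates. -/
lemma matchingOf_perfect_iff (hcubic : ∀ v : V, G.degree v = 3) (x : G.edgeSet → ZMod 2) :
    (matchingOf x).IsPerfectMatching ↔
      ∀ v, Even (Finset.univ.filter fun e : G.edgeSet => hd x e = v).card := by
  rw [Subgraph.isPerfectMatching_iff]
  constructor
  · intro h v
    rcases Finset.eq_empty_or_nonempty (Finset.univ.filter fun e : G.edgeSet => hd x e = v)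
      with h0 | ⟨e, he⟩
    · simp [h0]
    · obtain ⟨e', ⟨hne, h1⟩, h2⟩ := h e
      have hev : hd x e = v := by simpa using he
      have : (Finset.univ.filter fun e : G.edgeSet => hd x e = v) = {e, e'} := by
        ext d
        simp only [Finset.mem_filter, Finset.mem_univ, true_and, Finset.mem_insert,
          Finset.mem_singleton]
        constructor
        · intro hd'
          by_cases hde : d = e
          · exact Or.inl hde
          · exact Or.inr (h2 d ⟨Ne.symm hde, hev.trans hd'.symm⟩)
        · rintro (rfl | rfl)
          · exact hev
          · exact h1.symm.trans hev
      rw [this, Finset.card_pair hne]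
      exact even_two
  · intro h e
    have hle := card_incident_le hcubic (hd x e)
      (Finset.univ.filter fun e' : G.edgeSet => hd x e' = hd x e) (by
        intro d hd'
        have : hd x d = hd x e := by simpa using hd'
        exact this ▸ hd_mem x d)
    have hpos : 0 < (Finset.univ.filter fun e' : G.edgeSet => hd x e' = hd x e).card :=
      Finset.card_pos.2 ⟨e, by simp⟩
    have h2 : (Finset.univ.filter fun e' : G.edgeSet => hd x e' = hd x e).card = 2 := by
      obtain ⟨k, hk⟩ := h (hd x e)
      omega
    have he : e ∈ Finset.univ.filter fun e' : G.edgeSet => hd x e' = hd x e := by simp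
    have h1 := Finset.card_erase_of_mem he
    rw [h2] at h1
    obtain ⟨e', he'⟩ := Finset.card_eq_one.1 h1
    have key : ∀ d, (matchingOf x).Adj e d ↔ d = e' := by
      intro d
      rw [← Finset.mem_singleton, ← he']
      simp [matchingOf, eq_comm]
    exact ⟨e', (key e').2 rfl, fun d hd' => (key d).1 hd'⟩

omit [Fintype V] [DecidableEq V] [DecidableRel G.Adj] in
/-- The orientation is recovered from the matching: the head of an edge is the one vertex it shares
with its mate. -/
lemma matchingOf_inj {x y : G.edgeSet → ZMod 2} (hx : (matchingOf x).IsPerfectMatching)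
    (h : matchingOf x = matchingOf y) : x = y := by
  apply hd_injective
  ext1 e
  obtain ⟨e', hx', -⟩ := Subgraph.isPerfectMatching_iff.1 hx e
  have hy' := hx'
  rw [h] at hy'
  exact common_unique hx'.1 (hd_mem x e) (hx'.2 ▸ hd_mem x e') (hd_mem y e) (hy'.2 ▸ hd_mem y e')

lemma exists_matchingOf (hcubic : ∀ v : V, G.degree v = 3) {M : G.lineGraph.Subgraph}
    (hM : M.IsPerfectMatching) : ∃ x, matchingOf x = M := by
  choose m hm hmu using Subgraph.isPerfectMatching_iff.1 hM
  have hadj : ∀ e, e ≠ m e ∧ ∃ v, v ∈ (e : Sym2 V) ∧ v ∈ (m e : Sym2 V) := fun e =>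
    lineGraph_adj_iff_exists.1 (M.adj_sub (hm e))
  choose hne c hc hc' using hadj
  have hmm : ∀ e, m (m e) = e := fun e => (hmu (m e) e (hm e).symm).symm
  have hcm : ∀ e, c (m e) = c e := fun e =>
    common_unique (hne e) (by simpa only [hmm] using hc' (m e)) (hc (m e)) (hc e) (hc' e)
  obtain ⟨x, hx⟩ := exists_hd_eq c hc
  refine ⟨x, Subgraph.ext ?_ ?_⟩
  · exact (Set.eq_univ_of_forall hM.2).symm
  · ext e e'
    change (e ≠ e' ∧ hd x e = hd x e') ↔ _
    rw [hx]
    constructor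
    · rintro ⟨hee, hcc⟩
      by_contra hnot
      have h1 : e' ≠ m e := fun h => hnot (h ▸ hm e)
      have h2 : e ≠ m e' := fun h => hnot (h ▸ (hm e').symm)
      have h3 : m e ≠ m e' := fun h => hee (by rw [← hmm e, h, hmm])
      -- Two distinct matched pairs at the vertex `c e` would give it four incident edges.
      have hcard : ({e, m e, e', m e'} : Finset G.edgeSet).card = 4 := by
        rw [Finset.card_insert_of_notMem, Finset.card_insert_of_notMem, Finset.card_pair (hne e')]
        · simp [h1.symm, h3]
        · simp [hne e, hee, h2]
      have := card_incident_le hcubic (c e) {e, m e, e', m e'} (by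
        intro d hd
        simp only [Finset.mem_insert, Finset.mem_singleton] at hd
        rcases hd with rfl | rfl | rfl | rfl
        · exact hc _
        · exact hc' _
        · exact hcc ▸ hc _
        · exact hcc ▸ hc' _)
      omega
    · intro h
      obtain rfl := hmu e e' h
      exact ⟨hne e, (hcm e).symm⟩

lemma setOf_isPerfectMatching_eq_image (hcubic : ∀ v : V, G.degree v = 3) :
    {M : G.lineGraph.Subgraph | M.IsPerfectMatching} =
      matchingOf '' {x | (matchingOf x).IsPerfectMatching} := by
  ext M
  constructor
  · intro hM
    obtain ⟨x, rfl⟩ := exists_matchingOf hcubic hM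
    exact ⟨x, hM, rfl⟩
  · rintro ⟨x, hx, rfl⟩
    exact hx

/-! ### The incidence map over `𝔽₂` -/

variable (G) in
/-- The incidence map `𝔽₂^E → 𝔽₂^V`, sending an edge to the sum of its endpoints. -/
noncomputable def bdry : (G.edgeSet → ZMod 2) →ₗ[ZMod 2] (V → ZMod 2) :=
  Fintype.linearCombination (ZMod 2)
    fun e : G.edgeSet => (Pi.single (fst e) 1 + Pi.single (snd e) 1 : V → ZMod 2)

variable (V) in
/-- The sum of the coordinates. -/
def total : (V → ZMod 2) →ₗ[ZMod 2] ZMod 2 :=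
  ∑ v, LinearMap.proj v

omit [DecidableEq V] in
lemma total_apply (y : V → ZMod 2) : total V y = ∑ v, y v := by
  simp [total]

lemma total_single (v : V) (a : ZMod 2) : total V (Pi.single v a) = a := by
  simp [total_apply]

omit [Fintype V] [DecidableEq V] in
lemma vec_add_self (y : V → ZMod 2) : y + y = 0 :=
  funext fun _ => CharTwo.add_self_eq_zero _

/-- The in-degrees modulo `2` of the orientation `x`, as an affine function of `x`. -/
lemma sum_single_hd (x : G.edgeSet → ZMod 2) :
    ∑ e, (Pi.single (hd x e) 1 : V → ZMod 2) =
      ∑ e : G.edgeSet, (Pi.single (fst e) 1 : V → ZMod 2) + bdry G x := by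
  rw [bdry, Fintype.linearCombination_apply, ← Finset.sum_add_distrib]
  refine Finset.sum_congr rfl fun e _ => ?_
  have h01 : ∀ a : ZMod 2, a = 0 ∨ a = 1 := by decide
  rcases h01 (x e) with h | h
  · simp [hd, h]
  · have : (Pi.single (fst e) 1 + Pi.single (fst e) 1 : V → ZMod 2) = 0 := vec_add_self _
    simp [hd, h, ← add_assoc, this]

lemma even_indegree_iff (x : G.edgeSet → ZMod 2) :
    (∀ v, Even (Finset.univ.filter fun e : G.edgeSet => hd x e = v).card) ↔
      bdry G x = ∑ e : G.edgeSet, (Pi.single (fst e) 1 : V → ZMod 2) := by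
  have h1 : bdry G x = ∑ e : G.edgeSet, (Pi.single (fst e) 1 : V → ZMod 2) ↔
      ∑ e, (Pi.single (hd x e) 1 : V → ZMod 2) = 0 := by
    rw [sum_single_hd, add_eq_zero_iff_eq_neg, eq_comm,
      ← eq_neg_of_add_eq_zero_left (vec_add_self (bdry G x))]
  rw [h1, funext_iff]
  refine forall_congr' fun v => ?_
  rw [← ZMod.natCast_eq_zero_iff_even, Finset.sum_apply]
  simp [Pi.single_apply, eq_comm]

lemma single_add_single_mem_range (hconn : G.Connected) (u v : V) :
    (Pi.single u 1 + Pi.single v 1 : V → ZMod 2) ∈ LinearMap.range (bdry G) := by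
  obtain ⟨p⟩ := hconn.preconnected u v
  induction p with
  | nil =>
    rw [vec_add_self]
    exact zero_mem _
  | @cons u w v h p ih =>
    have hstep : (Pi.single u 1 + Pi.single w 1 : V → ZMod 2) ∈ LinearMap.range (bdry G) := by
      refine ⟨Pi.single ⟨s(u, w), h⟩ 1, ?_⟩
      rw [bdry, Fintype.linearCombination_apply_single, one_smul]
      have := edge_eq (⟨s(u, w), h⟩ : G.edgeSet)
      rcases Sym2.eq_iff.1 this with ⟨h1, h2⟩ | ⟨h1, h2⟩
      · rw [← h1, ← h2]
      · rw [← h1, ← h2, add_comm]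
    have := add_mem hstep ih
    rwa [add_assoc, ← add_assoc (Pi.single w 1), vec_add_self, zero_add] at this

lemma range_bdry (hconn : G.Connected) :
    LinearMap.range (bdry G) = LinearMap.ker (total V) := by
  apply le_antisymm
  · rintro _ ⟨x, rfl⟩
    rw [LinearMap.mem_ker, bdry, Fintype.linearCombination_apply, map_sum]
    refine Finset.sum_eq_zero fun e _ => ?_
    rw [map_smul, map_add, total_single, total_single, CharTwo.add_self_eq_zero, smul_zero]
  · intro y hy
    obtain ⟨r⟩ := hconn.nonempty
    -- With coordinate sum `0`, adding multiples of the root's basis vector changes nothing.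
    have : y = ∑ v, y v • (Pi.single v 1 + Pi.single r 1 : V → ZMod 2) := by
      simp_rw [smul_add, Finset.sum_add_distrib, ← Finset.sum_smul]
      rw [← total_apply, LinearMap.mem_ker.1 hy, zero_smul, add_zero]
      exact pi_eq_sum_univ' y
    rw [this]
    exact Submodule.sum_mem _ fun v _ =>
      Submodule.smul_mem _ _ (single_add_single_mem_range hconn v r)

lemma finrank_ker_bdry (hconn : G.Connected) :
    Module.finrank (ZMod 2) (LinearMap.ker (bdry G)) + Fintype.card V = G.edgeFinset.card + 1 := by
  have h1 := LinearMap.finrank_range_add_finrank_ker (bdry G)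
  have h2 := LinearMap.finrank_range_add_finrank_ker (total V)
  have hsurj : LinearMap.range (total V) = ⊤ := by
    obtain ⟨r⟩ := hconn.nonempty
    exact LinearMap.range_eq_top.2 fun a => ⟨Pi.single r a, total_single r a⟩
  rw [range_bdry hconn, Module.finrank_fintype_fun_eq_card] at h1
  rw [hsurj, finrank_top, Module.finrank_self, Module.finrank_fintype_fun_eq_card] at h2
  have h3 : G.edgeFinset.card = Fintype.card G.edgeSet := Set.toFinset_card _
  omega

end CubicLineGraph

open CubicLineGraph in
/-- Let `G` be a finite connected cubic simple graph with `ν` vertices and an even number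
of edges. Then the number of perfect matchings of the line graph `L(G)` is `2 ^ (ν / 2 + 1)`. -/
theorem perfectMatchings_lineGraph_of_cubic
    {V : Type*} [Fintype V] [DecidableEq V] (G : SimpleGraph V) [DecidableRel G.Adj]
    (hconn : G.Connected)
    (hcubic : ∀ v : V, G.degree v = 3)
    (heven : Even G.edgeFinset.card) :
    numPM G.lineGraph = 2 ^ (Fintype.card V / 2 + 1) := by
  have hE : G.edgeFinset.card = Fintype.card G.edgeSet := Set.toFinset_card _
  obtain ⟨x₀, hx₀⟩ : ∑ e : G.edgeSet, (Pi.single (fst e) 1 : V → ZMod 2) ∈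
      LinearMap.range (bdry G) := by
    rw [range_bdry hconn, LinearMap.mem_ker, map_sum]
    simp_rw [total_single]
    rw [Finset.sum_const, Finset.card_univ, ← hE, nsmul_one]
    exact (ZMod.natCast_eq_zero_iff_even).2 heven
  have hset : {x : G.edgeSet → ZMod 2 | (matchingOf x).IsPerfectMatching} =
      (x₀ + ·) '' (LinearMap.ker (bdry G) : Set (G.edgeSet → ZMod 2)) := by
    ext x
    rw [Set.mem_ofPred_eq, matchingOf_perfect_iff hcubic, even_indegree_iff, ← hx₀]
    constructor
    · intro h
      exact ⟨x - x₀, by simp [h], by simp⟩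
    · rintro ⟨y, hy, rfl⟩
      simpa using hy
  have hdeg := G.sum_degrees_eq_twice_card_edges
  simp only [hcubic, Finset.sum_const, Finset.card_univ, smul_eq_mul] at hdeg
  have hrank := finrank_ker_bdry hconn
  have hinj : Set.InjOn matchingOf {x : G.edgeSet → ZMod 2 | (matchingOf x).IsPerfectMatching} :=
    fun x hx y _ h => matchingOf_inj hx h
  rw [numPM, setOf_isPerfectMatching_eq_image hcubic,
    Set.InjOn.ncard_image hinj, hset,
    Set.ncard_image_of_injective _ (add_right_injective x₀)]
  change Nat.card (LinearMap.ker (bdry G)) = _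
  rw [Module.natCard_eq_pow_finrank (K := ZMod 2), Nat.card_zmod]
  congr 1
  omega
end

section
/- Let G be a finite connected cubic (3-regular) simple graph with ν vertices (ν is even). Then the number of perfect matchings of the line graph L(S(G)) of the full subdivision S(G) of G (equivalently, of the clique-inserted graph of G) equals 2^(ν/2 + 1). -/
/-!
The edges of the full subdivision `S(G)` are the pairs (vertex, incident edge) of `G`, i.e. the darts
of `G`; in `L(S(G))` two darts are adjacent when they have the same source or are reversals of each
other (`lineGraph_adj_dartToEdge`). Thus `L(S(G))` is `G` with each vertex replaced by a triangle and
each edge of `G` kept as a link between two triangles.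

A perfect matching is determined by the set `F` of link edges it uses. At every vertex the darts off
`F` are matched among themselves inside a triangle, so there are `0` or `2` of them and `F` has odd
degree there (`boundaryMap_linkEdges`). Conversely, if `F` has odd degree everywhere, then each
triangle has `0` or `2` unmatched vertices and the matching is completed in exactly one way
(`isMatchingRel_relOfEdges`, `relOfEdges_linkEdges`).

It remains to count the `F : E → ZMod 2` whose mod-2 boundary is the all-ones vector. As `G` is
connected, the image of the boundary map is the hyperplane of vectors with coordinate sum zero
(`range_boundaryMap`). It contains the all-ones vector because `ν` is even, so the solutions form a
coset of the kernel, of dimension `|E| - (ν - 1) = 3ν/2 - ν + 1 = ν/2 + 1`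
(`ncard_boundaryMap_fiber`).
-/

open SimpleGraph

/-- The full subdivision `S(G)` of a simple graph `G`: every edge is subdivided exactly once.
Its vertices are `V(G) ⊕ E(G)`, and a vertex `v : V(G)` is adjacent to an edge `e : E(G)`
if and only if `v` is an endpoint of `e`. -/
def fullSubdivision {V : Type*} (G : SimpleGraph V) : SimpleGraph (V ⊕ G.edgeSet) :=
  SimpleGraph.fromRel (fun a b =>
    ∃ (v : V) (e : G.edgeSet), a = Sum.inl v ∧ b = Sum.inr e ∧ v ∈ (e : Sym2 V))

/-! ### Edge sets with prescribed degree parities -/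

open Classical in
/-- The mod-2 boundary map `∂ : (ZMod 2)^E → (ZMod 2)^V`: the value at `v` is the parity of the number
of chosen edges at `v`. The edges at `v` are enumerated by the darts with source `v`. -/
noncomputable def boundaryMap {V : Type*} [Fintype V] (G : SimpleGraph V) :
    (G.edgeSet → ZMod 2) →ₗ[ZMod 2] (V → ZMod 2) where
  toFun F v := ∑ d : G.Dart, if d.fst = v then F ⟨d.edge, d.edge_mem⟩ else 0
  map_add' F F' := by
    ext v
    simp only [Pi.add_apply, ← Finset.sum_add_distrib]
    exact Finset.sum_congr rfl fun d _ => by split_ifs <;> simp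
  map_smul' c F := by
    ext v
    simp only [Pi.smul_apply, RingHom.id_apply, smul_eq_mul, Finset.mul_sum]
    exact Finset.sum_congr rfl fun d _ => by split_ifs <;> simp

/-- The sum of all coordinates, as a linear functional on `(ZMod 2)^V`. -/
def totalSum (V : Type*) [Fintype V] : (V → ZMod 2) →ₗ[ZMod 2] ZMod 2 where
  toFun x := ∑ v, x v
  map_add' x y := by simp [Finset.sum_add_distrib]
  map_smul' c x := by simp [Finset.mul_sum]

open Classical in
lemma boundaryMap_single {V : Type*} [Fintype V] (G : SimpleGraph V) {v w : V} (h : G.Adj v w) :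
    boundaryMap G (Pi.single ⟨s(v, w), h⟩ 1) = Pi.single v 1 + Pi.single w 1 := by
  ext u
  have h1 : ∀ d : G.Dart, (if d.fst = u then
      (Pi.single (⟨s(v, w), h⟩ : G.edgeSet) (1 : ZMod 2) : G.edgeSet → ZMod 2)
        ⟨d.edge, d.edge_mem⟩ else 0) =
      (if d = ⟨(v, w), h⟩ then (Pi.single v 1 : V → ZMod 2) u else 0) +
      (if d = ⟨(w, v), h.symm⟩ then (Pi.single w 1 : V → ZMod 2) u else 0) := by
    rintro ⟨⟨a, b⟩, hab⟩
    have hvw : v ≠ w := h.ne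
    simp only [Pi.single_apply, SimpleGraph.Dart.edge_mk, SimpleGraph.Dart.mk.injEq,
      Prod.mk.injEq]
    grind
  simp only [boundaryMap, LinearMap.coe_mk, AddHom.coe_mk, Pi.add_apply]
  rw [Finset.sum_congr rfl fun d _ => h1 d, Finset.sum_add_distrib]
  simp

/-- Handshake lemma mod 2: both darts of an edge contribute the same value. -/
lemma totalSum_boundaryMap {V : Type*} [Fintype V] (G : SimpleGraph V) (F : G.edgeSet → ZMod 2) :
    totalSum V (boundaryMap G F) = 0 := by
  classical
  simp only [boundaryMap, totalSum, LinearMap.coe_mk, AddHom.coe_mk]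
  rw [Finset.sum_comm]
  simp only [Finset.sum_ite_eq, Finset.mem_univ, if_true]
  refine Finset.sum_involution (fun d _ => d.symm) ?_ ?_ ?_ ?_
  · intro d _
    simp only [SimpleGraph.Dart.edge_symm]
    exact CharTwo.add_self_eq_zero _
  · intro d _ _
    exact d.symm_ne
  · simp
  · simp

/-- In a connected graph the boundaries are exactly the vectors of total sum zero: each
`δ_v + δ_w` is the boundary of a walk from `v` to `w`. -/
lemma range_boundaryMap {V : Type*} [Fintype V] (G : SimpleGraph V) (hconn : G.Connected) :
    LinearMap.range (boundaryMap G) = LinearMap.ker (totalSum V) := by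
  classical
  apply le_antisymm
  · rintro _ ⟨F, rfl⟩
    exact totalSum_boundaryMap G F
  · intro x hx
    have hpair : ∀ v w : V, (Pi.single v 1 + Pi.single w 1 : V → ZMod 2) ∈
        LinearMap.range (boundaryMap G) := by
      have htwo : ∀ y : V → ZMod 2, y + y = 0 := fun y => by
        ext u
        exact CharTwo.add_self_eq_zero (y u)
      intro v w
      obtain ⟨p⟩ := hconn.preconnected v w
      induction p with
      | nil => rw [htwo]; exact zero_mem _
      | @cons a b c h p ih =>
        have h2 := add_mem (LinearMap.mem_range_self (boundaryMap G)
          (Pi.single ⟨s(a, b), h⟩ 1)) ih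
        rw [boundaryMap_single] at h2
        convert h2 using 1
        have := htwo (Pi.single b 1)
        grind
    obtain ⟨v₀⟩ := hconn.nonempty
    have hx' : ∑ v, x v = 0 := hx
    have : x = ∑ v, x v • (Pi.single v 1 + Pi.single v₀ 1 : V → ZMod 2) := by
      simp only [smul_add, Finset.sum_add_distrib, ← Finset.sum_smul, hx', zero_smul, add_zero]
      exact pi_eq_sum_univ' x
    rw [this]
    exact Submodule.sum_mem _ fun v _ => Submodule.smul_mem _ _ (hpair v v₀)

/-- For a connected cubic graph, the edge sets with all degrees odd form a coset of the cycle space,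
whose dimension is `|E| - |V| + 1 = ν / 2 + 1`. -/
lemma ncard_boundaryMap_fiber {V : Type*} [Fintype V] (G : SimpleGraph V) [DecidableRel G.Adj]
    (hconn : G.Connected) (hcubic : ∀ v : V, G.degree v = 3) :
    Set.ncard {F | boundaryMap G F = 1} = 2 ^ (Fintype.card V / 2 + 1) := by
  classical
  have hE : 3 * Fintype.card V = 2 * Fintype.card G.edgeSet := by
    have := G.sum_degrees_eq_twice_card_edges
    simp only [hcubic, Finset.sum_const, Finset.card_univ, smul_eq_mul] at this
    rw [← SimpleGraph.edgeFinset_card, ← this, mul_comm]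
  have hone : (1 : V → ZMod 2) ∈ LinearMap.range (boundaryMap G) := by
    rw [range_boundaryMap G hconn]
    change ∑ v : V, (1 : ZMod 2) = 0
    simp only [Finset.sum_const, Finset.card_univ, nsmul_eq_mul, mul_one]
    rw [ZMod.natCast_eq_zero_iff]
    omega
  obtain ⟨F₀, hF₀⟩ := hone
  have hset : {F | boundaryMap G F = 1} =
      (fun F => F + F₀) '' (LinearMap.ker (boundaryMap G) : Set (G.edgeSet → ZMod 2)) := by
    ext F
    constructor
    · intro hF
      refine ⟨F - F₀, ?_, by simp⟩
      have hF' : boundaryMap G F = 1 := hF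
      simp [hF', hF₀]
    · rintro ⟨K, hK, rfl⟩
      have hK' : boundaryMap G K = 0 := hK
      simp [hK', hF₀]
  rw [hset, Set.ncard_image_of_injective _ (add_left_injective F₀), ← Nat.card_coe_set_eq]
  have h1 := LinearMap.finrank_range_add_finrank_ker (boundaryMap G)
  have h2 := LinearMap.finrank_range_add_finrank_ker (totalSum V)
  have hsurj : LinearMap.range (totalSum V) = ⊤ := by
    rw [LinearMap.range_eq_top]
    intro c
    obtain ⟨v₀⟩ := hconn.nonempty
    exact ⟨Pi.single v₀ c, by simp [totalSum]⟩
  rw [range_boundaryMap G hconn, Module.finrank_fintype_fun_eq_card] at h1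
  rw [hsurj, finrank_top, Module.finrank_self, Module.finrank_fintype_fun_eq_card] at h2
  have h3 := Module.natCard_eq_pow_finrank (K := ZMod 2) (V := LinearMap.ker (boundaryMap G))
  rw [Nat.card_zmod] at h3
  refine h3.trans ?_
  congr 1
  omega

/-! ### The line graph of the subdivision in terms of darts -/

/-- `R` is a perfect matching of the graph on `D` with adjacency `A`, as a symmetric relation. -/
def IsMatchingRel {D : Type*} (A R : D → D → Prop) : Prop :=
  (∀ d d', R d d' → A d d') ∧ (∀ d d', R d d' → R d' d) ∧ ∀ d, ∃! d', R d d'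

lemma numPM_eq_ncard_matchingRel {W D : Type*} (H : SimpleGraph W) (φ : D ≃ W) :
    numPM H = Set.ncard {R | IsMatchingRel (fun d d' => H.Adj (φ d) (φ d')) R} := by
  refine Set.ncard_congr (fun M _ d d' => M.Adj (φ d) (φ d')) ?_ ?_ ?_
  · intro M hM
    refine ⟨fun d d' h => h.adj_sub, fun d d' h => h.symm, fun d => ?_⟩
    obtain ⟨w, hw, huniq⟩ := SimpleGraph.Subgraph.isPerfectMatching_iff.1 hM (φ d)
    exact ⟨φ.symm w, by simpa using hw, fun d' hd' => by simp [← huniq _ hd']⟩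
  · intro M M' hM hM' h
    have hv := SimpleGraph.Subgraph.isSpanning_iff.1 hM.2
    have hv' := SimpleGraph.Subgraph.isSpanning_iff.1 hM'.2
    refine SimpleGraph.Subgraph.ext (hv.trans hv'.symm) ?_
    ext a b
    have := congrFun (congrFun h (φ.symm a)) (φ.symm b)
    simpa using this
  · rintro R ⟨hA, hs, hu⟩
    refine ⟨{ verts := Set.univ
              Adj := fun a b => R (φ.symm a) (φ.symm b)
              adj_sub := fun h => by simpa using hA _ _ h
              edge_vert := fun _ => Set.mem_univ _
              symm := ⟨fun a b h => hs _ _ h⟩ }, ?_, ?_⟩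
    · refine SimpleGraph.Subgraph.isPerfectMatching_iff.2 fun w => ?_
      obtain ⟨d, hd, huniq⟩ := hu (φ.symm w)
      exact ⟨φ d, by simpa using hd, fun w' hw' => by simp [← huniq _ hw']⟩
    · simp

lemma fullSubdivision_adj_inl_inr {V : Type*} (G : SimpleGraph V) (v : V) (e : G.edgeSet) :
    (fullSubdivision G).Adj (Sum.inl v) (Sum.inr e) ↔ v ∈ (e : Sym2 V) := by
  simp [fullSubdivision]

/-- Darts of `G` correspond to edges of `S(G)`: a dart is a vertex with an edge at it. -/
def dartToEdge {V : Type*} (G : SimpleGraph V) (d : G.Dart) : (fullSubdivision G).edgeSet :=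
  ⟨s(Sum.inl d.fst, Sum.inr ⟨d.edge, d.edge_mem⟩), by
    rw [SimpleGraph.mem_edgeSet, fullSubdivision_adj_inl_inr]
    exact Sym2.mem_mk_left _ _⟩

lemma dart_ext_fst_edge {V : Type*} {G : SimpleGraph V} {d d' : G.Dart} (h : d.fst = d'.fst)
    (he : d.edge = d'.edge) : d = d' := by
  rcases SimpleGraph.dart_edge_eq_iff d d' |>.1 he with h1 | h1
  · exact h1
  · subst h1
    exact absurd h d'.adj.symm.ne

lemma dartToEdge_bijective {V : Type*} (G : SimpleGraph V) :
    Function.Bijective (dartToEdge G) := by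
  constructor
  · intro d d' h
    simp [dartToEdge] at h
    exact dart_ext_fst_edge h.1 h.2
  · rintro ⟨e, he⟩
    have key : ∀ (v : V) (e : G.edgeSet) (h : v ∈ (e : Sym2 V)), ∃ d : G.Dart,
        (dartToEdge G d : Sym2 (V ⊕ G.edgeSet)) = s(Sum.inl v, Sum.inr e) := by
      rintro v ⟨e, he⟩ h
      obtain ⟨w, rfl⟩ := h
      exact ⟨⟨(v, w), he⟩, rfl⟩
    induction e with
    | h a b =>
      obtain ⟨-, h⟩ := id he
      rcases h with ⟨v, e, rfl, rfl, h⟩ | ⟨v, e, rfl, rfl, h⟩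
      · obtain ⟨d, hd⟩ := key v e h
        exact ⟨d, Subtype.ext hd⟩
      · obtain ⟨d, hd⟩ := key v e h
        exact ⟨d, Subtype.ext (hd.trans Sym2.eq_swap)⟩

lemma lineGraph_adj_dartToEdge {V : Type*} (G : SimpleGraph V) (d d' : G.Dart) :
    (fullSubdivision G).lineGraph.Adj (dartToEdge G d) (dartToEdge G d') ↔
      d ≠ d' ∧ (d.fst = d'.fst ∨ d' = d.symm) := by
  rw [SimpleGraph.lineGraph_adj_iff_exists, (dartToEdge_bijective G).1.ne_iff]
  refine and_congr_right fun hne => ?_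
  have : (∃ x, x ∈ (dartToEdge G d : Sym2 (V ⊕ G.edgeSet)) ∧
      x ∈ (dartToEdge G d' : Sym2 (V ⊕ G.edgeSet))) ↔ d.fst = d'.fst ∨ d'.edge = d.edge := by
    simp [dartToEdge, eq_comm]
  rw [this, SimpleGraph.dart_edge_eq_iff]
  simp [hne.symm]

/-! ### Matchings and their link edges -/

/-- The three darts leaving a vertex of a cubic graph, and the boundary there as a sum of three
terms. -/
lemma exists_three_darts {V : Type*} [Fintype V] (G : SimpleGraph V) [DecidableRel G.Adj]
    (hcubic : ∀ v : V, G.degree v = 3) (v : V) :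
    ∃ a b c : G.Dart, a ≠ b ∧ a ≠ c ∧ b ≠ c ∧ (∀ d : G.Dart, d.fst = v ↔ d = a ∨ d = b ∨ d = c) ∧
      ∀ F, boundaryMap G F v = F ⟨a.edge, a.edge_mem⟩ + F ⟨b.edge, b.edge_mem⟩ +
        F ⟨c.edge, c.edge_mem⟩ := by
  classical
  have h : (Finset.univ.filter fun d : G.Dart => d.fst = v).card = 3 := by
    rw [← hcubic v, ← SimpleGraph.dart_fst_fiber_card_eq_degree]
  obtain ⟨a, b, c, hab, hac, hbc, h3⟩ := Finset.card_eq_three.1 h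
  refine ⟨a, b, c, hab, hac, hbc, fun d => ?_, fun F => ?_⟩
  · have := Finset.ext_iff.1 h3 d
    simpa using this
  · simp only [boundaryMap, LinearMap.coe_mk, AddHom.coe_mk]
    rw [← Finset.sum_filter]
    trans ∑ d ∈ ({a, b, c} : Finset G.Dart), F ⟨d.edge, d.edge_mem⟩
    · refine Finset.sum_congr ?_ fun _ _ => rfl
      ext d
      have := Finset.ext_iff.1 h3 d
      simpa using this
    rw [Finset.sum_insert (by simp [hab, hac]), Finset.sum_insert (by simp [hbc]),
      Finset.sum_singleton, add_assoc]

open Classical in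
/-- The indicator of the edges `e` of `G` whose two darts are matched with each other. -/
noncomputable def linkEdges {V : Type*} {G : SimpleGraph V} (R : G.Dart → G.Dart → Prop)
    (e : G.edgeSet) : ZMod 2 :=
  if ∃ d : G.Dart, d.edge = e ∧ R d d.symm then 1 else 0

lemma linkEdges_dart {V : Type*} {G : SimpleGraph V} {R : G.Dart → G.Dart → Prop}
    (hs : ∀ d d', R d d' → R d' d) (d : G.Dart) [Decidable (R d d.symm)] :
    linkEdges R ⟨d.edge, d.edge_mem⟩ = if R d d.symm then 1 else 0 := by
  have : (∃ d' : G.Dart, d'.edge = d.edge ∧ R d' d'.symm) ↔ R d d.symm := by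
    constructor
    · rintro ⟨d', h, hR⟩
      rcases (SimpleGraph.dart_edge_eq_iff d' d).1 h with rfl | rfl
      · exact hR
      · simpa using hs _ _ hR
    · exact fun h => ⟨d, rfl, h⟩
  simp only [linkEdges, this]

/-- Adjacency in `L(S(G))`, read on darts through `dartToEdge`. -/
def dartAdj {V : Type*} (G : SimpleGraph V) (d d' : G.Dart) : Prop :=
  d ≠ d' ∧ (d.fst = d'.fst ∨ d' = d.symm)

/-- The matching with prescribed link edges `F`: a dart on an edge of `F` is matched with its
reversal, any other dart with the other dart off `F` at the same vertex. -/
def relOfEdges {V : Type*} {G : SimpleGraph V} (F : G.edgeSet → ZMod 2) (d d' : G.Dart) : Prop :=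
  (d' = d.symm ∧ F ⟨d.edge, d.edge_mem⟩ = 1) ∨
    (d ≠ d' ∧ d.fst = d'.fst ∧ F ⟨d.edge, d.edge_mem⟩ = 0 ∧ F ⟨d'.edge, d'.edge_mem⟩ = 0)

lemma fst_symm_ne {V : Type*} {G : SimpleGraph V} (d : G.Dart) : d.fst ≠ d.symm.fst :=
  d.adj.ne

/-- The darts at a vertex which are not on link edges are matched among themselves, so their number
is `0` or `2`, and the number of link edges at the vertex is odd. -/
lemma boundaryMap_linkEdges {V : Type*} [Fintype V] (G : SimpleGraph V) [DecidableRel G.Adj]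
    (hcubic : ∀ v : V, G.degree v = 3) {R : G.Dart → G.Dart → Prop}
    (hR : IsMatchingRel (dartAdj G) R) : boundaryMap G (linkEdges R) = 1 := by
  classical
  obtain ⟨hA, hs, hu⟩ := hR
  ext v
  obtain ⟨a, b, c, hab, hac, hbc, hd, hsum⟩ := exists_three_darts G hcubic v
  rw [hsum, linkEdges_dart hs, linkEdges_dart hs, linkEdges_dart hs, Pi.one_apply]
  have uniq : ∀ {x y z}, R x y → R x z → y = z := fun h h' => (hu _).unique h h'
  have key : ∀ x, x.fst = v → R x x.symm ∨ ((R x a ∧ x ≠ a) ∨ (R x b ∧ x ≠ b) ∨ (R x c ∧ x ≠ c)) := by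
    intro x hx
    obtain ⟨y, hy, -⟩ := hu x
    obtain ⟨hne, h | rfl⟩ := hA _ _ hy
    · rcases (hd y).1 (h ▸ hx) with rfl | rfl | rfl <;> simp [hy, hne]
    · exact Or.inl hy
  have hav : a.fst = v := (hd a).2 (by simp)
  have hbv : b.fst = v := (hd b).2 (by simp)
  have hcv : c.fst = v := (hd c).2 (by simp)
  -- A dart on a link edge is not matched with a dart at the same vertex.
  have hno : ∀ x y, x.fst = v → y.fst = v → R x y → ¬ R x x.symm := by
    intro x y hx hy hxy hxx
    have := uniq hxy hxx
    subst this
    exact fst_symm_ne x (hx.trans hy.symm)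
  have ka := key a hav
  have kb := key b hbv
  have kc := key c hcv
  have n1 := hno a b hav hbv
  have n2 := hno a c hav hcv
  have n3 := hno b a hbv hav
  have n4 := hno b c hbv hcv
  have n5 := hno c a hcv hav
  have n6 := hno c b hcv hbv
  have s1 : R a b ↔ R b a := ⟨hs _ _, hs _ _⟩
  have s2 : R a c ↔ R c a := ⟨hs _ _, hs _ _⟩
  have s3 : R b c ↔ R c b := ⟨hs _ _, hs _ _⟩
  have u1 : ¬ (R a b ∧ R a c) := fun h => hbc (uniq h.1 h.2)
  have u2 : ¬ (R b a ∧ R b c) := fun h => hac (uniq h.1 h.2)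
  have u3 : ¬ (R c a ∧ R c b) := fun h => hab (uniq h.1 h.2)
  have h3 : (1 : ZMod 2) + 1 + 1 = 1 := by decide
  simp only [ne_eq, not_true_eq_false, and_false, false_or, or_false] at ka kb kc
  by_cases ha : R a a.symm <;> by_cases hb : R b b.symm <;> by_cases hc : R c c.symm <;>
    simp only [ha, hb, hc, if_true, if_false, h3, add_zero, zero_add] <;> exfalso <;> clear hd hsum hu hA hs uniq key hno <;> grind

lemma zmod_two_cases (x : ZMod 2) : x = 0 ∨ x = 1 := by
  revert x; decide

/-- If all degrees of `F` are odd, exactly `0` or `2` darts at each vertex are off `F`, so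
every dart off `F` has a unique partner. -/
lemma isMatchingRel_relOfEdges {V : Type*} [Fintype V] (G : SimpleGraph V) [DecidableRel G.Adj]
    (hcubic : ∀ v : V, G.degree v = 3) {F : G.edgeSet → ZMod 2} (hF : boundaryMap G F = 1) :
    IsMatchingRel (dartAdj G) (relOfEdges F) := by
  refine ⟨?_, ?_, fun d => ?_⟩
  · rintro d d' (⟨rfl, -⟩ | ⟨hne, h, -, -⟩)
    · exact ⟨d.symm_ne.symm, Or.inr rfl⟩
    · exact ⟨hne, Or.inl h⟩
  · rintro d d' (⟨rfl, h⟩ | ⟨hne, h, h0, h0'⟩)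
    · exact Or.inl ⟨by simp, by simpa using h⟩
    · exact Or.inr ⟨hne.symm, h.symm, h0', h0⟩
  · rcases zmod_two_cases (F ⟨d.edge, d.edge_mem⟩) with h0 | h1
    · obtain ⟨a, b, c, hab, hac, hbc, hd, hsum⟩ := exists_three_darts G hcubic d.fst
      have h := hsum F
      rw [hF, Pi.one_apply] at h
      have key : ∀ d', relOfEdges F d d' ↔ d' ≠ d ∧ (d' = a ∨ d' = b ∨ d' = c) ∧
          F ⟨d'.edge, d'.edge_mem⟩ = 0 := by
        intro d'
        rw [← hd d']
        simp only [relOfEdges, h0]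
        simp [eq_comm]
      simp only [key]
      have hone : (1 : ZMod 2) ≠ 0 := by decide
      have h2 : (1 : ZMod 2) + 1 = 0 := by decide
      rcases (hd d).1 rfl with rfl | rfl | rfl
      · rcases zmod_two_cases (F ⟨b.edge, b.edge_mem⟩) with hb | hb <;>
          rcases zmod_two_cases (F ⟨c.edge, c.edge_mem⟩) with hc | hc
        · simp [h0, hb, hc] at h
        · exact ⟨b, by grind, by grind⟩
        · exact ⟨c, by grind, by grind⟩
        · simp [h0, hb, hc, h2] at h
      · rcases zmod_two_cases (F ⟨a.edge, a.edge_mem⟩) with hb | hb <;>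
          rcases zmod_two_cases (F ⟨c.edge, c.edge_mem⟩) with hc | hc
        · simp [h0, hb, hc] at h
        · exact ⟨a, by grind, by grind⟩
        · exact ⟨c, by grind, by grind⟩
        · simp [h0, hb, hc, h2] at h
      · rcases zmod_two_cases (F ⟨a.edge, a.edge_mem⟩) with hb | hb <;>
          rcases zmod_two_cases (F ⟨b.edge, b.edge_mem⟩) with hc | hc
        · simp [h0, hb, hc] at h
        · exact ⟨a, by grind, by grind⟩
        · exact ⟨b, by grind, by grind⟩
        · simp [h0, hb, hc, h2] at h
    · refine ⟨d.symm, Or.inl ⟨rfl, h1⟩, ?_⟩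
      rintro d' (⟨rfl, -⟩ | ⟨-, -, h0, -⟩)
      · rfl
      · rw [h1] at h0
        exact absurd h0 (by decide)

lemma linkEdges_relOfEdges {V : Type*} {G : SimpleGraph V} (F : G.edgeSet → ZMod 2) :
    linkEdges (relOfEdges F) = F := by
  ext ⟨e, he⟩
  have key : (∃ d : G.Dart, d.edge = e ∧ relOfEdges F d d.symm) ↔ F ⟨e, he⟩ = 1 := by
    constructor
    · rintro ⟨d, rfl, ⟨-, h⟩ | ⟨-, h, -⟩⟩
      · exact h
      · exact absurd h (fst_symm_ne d)
    · intro h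
      induction e with
      | h a b => exact ⟨⟨(a, b), he⟩, rfl, Or.inl ⟨rfl, h⟩⟩
  simp only [linkEdges, key]
  rcases zmod_two_cases (F ⟨e, he⟩) with h | h <;> simp [h]

/-- A matching is contained in the one reconstructed from its link edges, hence equal to it, as both
match every dart exactly once. -/
lemma relOfEdges_linkEdges {V : Type*} [Fintype V] (G : SimpleGraph V) [DecidableRel G.Adj]
    (hcubic : ∀ v : V, G.degree v = 3) {R : G.Dart → G.Dart → Prop}
    (hR : IsMatchingRel (dartAdj G) R) : relOfEdges (linkEdges R) = R := by
  classical
  have hR' := isMatchingRel_relOfEdges G hcubic (boundaryMap_linkEdges G hcubic hR)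
  obtain ⟨hA, hs, hu⟩ := hR
  have hsub : ∀ d d', R d d' → relOfEdges (linkEdges R) d d' := by
    intro d d' h
    by_cases hsymm : d' = d.symm
    · subst hsymm
      exact Or.inl ⟨rfl, by rw [linkEdges_dart hs, if_pos h]⟩
    · obtain ⟨hne, h1 | h1⟩ := hA _ _ h
      · refine Or.inr ⟨hne, h1, ?_, ?_⟩
        · rw [linkEdges_dart hs, if_neg fun h' => hsymm ((hu _).unique h h')]
        · rw [linkEdges_dart hs, if_neg fun h' => hsymm ?_]
          rw [(hu _).unique (hs _ _ h) h', SimpleGraph.Dart.symm_symm]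
      · exact absurd h1 hsymm
  ext d d'
  refine ⟨fun h => ?_, hsub d d'⟩
  obtain ⟨y, hy, -⟩ := hu d
  rwa [(hR'.2.2 d).unique h (hsub d y hy)]

/-- Let `G` be a finite connected cubic simple graph with `ν` vertices. Then the number of
perfect matchings of the line graph of the full subdivision `S(G)` (the clique-inserted graph
of `G`) equals `2 ^ (ν / 2 + 1)`. -/
theorem perfectMatchings_lineGraph_fullSubdivision_of_cubic
    {V : Type*} [Fintype V] (G : SimpleGraph V) [DecidableRel G.Adj]
    (hconn : G.Connected)
    (hcubic : ∀ v : V, G.degree v = 3) :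
    numPM (fullSubdivision G).lineGraph = 2 ^ (Fintype.card V / 2 + 1) := by
  rw [numPM_eq_ncard_matchingRel _ (Equiv.ofBijective _ (dartToEdge_bijective G)),
    ← ncard_boundaryMap_fiber G hconn hcubic]
  simp only [Equiv.ofBijective_apply, lineGraph_adj_dartToEdge]
  refine Set.ncard_congr (fun R _ => linkEdges R) ?_ ?_ ?_
  · exact fun R hR => boundaryMap_linkEdges G hcubic hR
  · intro R R' hR hR' h
    rw [← relOfEdges_linkEdges G hcubic hR, h, relOfEdges_linkEdges G hcubic hR']
  · exact fun F hF => ⟨relOfEdges F, isMatchingRel_relOfEdges G hcubic hF, linkEdges_relOfEdges F⟩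
end

section
/- Let G be a finite connected cubic (3-regular) simple graph with ν vertices such that G is a line graph (i.e. G is isomorphic to L(H) for some finite simple graph H) and ν > 4 (equivalently, G is not isomorphic to the complete graph K4). Then the number of perfect matchings of G equals 2^(ν/6 + 1); in particular ν is divisible by 6. -/
/-!
Write `G = L(H)`. The degree of an edge `uv` of `H` in the line graph is `deg u + deg v - 2`, so
`deg u + deg v = 5` for every edge. If some edge had end degrees `1` and `4`, connectedness would
make `H` a four-edge star and `G = K₄`; hence every edge of `H` joins a vertex of degree `3` to one
of degree `2`. In other words `H` is the subdivision of a connected cubic multigraph `K`, and `G`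
arises from `K` by replacing each vertex with a triangle (`IsLineRealization.exists_inflation`).

A perfect matching of `G` is determined by the set of edges of `K` that it contains, and a set of
edges of `K` occurs exactly when it has odd degree at every vertex: a triangle can be completed in
one way if one or three of its vertices are matched outside it, and in no way otherwise
(`IsTriangleInflation.numPM_eq`). With `ν = 3 |V(K)| = 2 |E(K)|`, these edge sets are the solutions
of a linear system over `ZMod 2`. Since `K` is connected, its incidence matrix has rank
`|V(K)| - 1` and its column space consists of all vectors with coordinate sum `0`; as `|V(K)|` is
even, the system is solvable and has `2 ^ (|E(K)| - |V(K)| + 1) = 2 ^ (ν / 6 + 1)` solutions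
(`IsTriangleInflation.ncard_joins`).
-/

open SimpleGraph

/-! ### Triangle inflations of cubic multigraphs -/

/-- `G` is obtained from a cubic multigraph with vertex set `A` and edge set `B` by replacing every
vertex with a triangle: a vertex of `G` is a half-edge, `t` sends it to its end (equivalently, to
its triangle) and `d` to its edge. The field `inj` excludes loops of the multigraph; parallel edges
are allowed. -/
structure IsTriangleInflation {V A B : Type*} [Fintype V] [DecidableEq A] [DecidableEq B]
    (G : SimpleGraph V) (t : V → A) (d : V → B) : Prop where
  card_t : ∀ a, (Finset.univ.filter (fun x => t x = a)).card = 3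
  card_d : ∀ b, (Finset.univ.filter (fun x => d x = b)).card = 2
  inj : ∀ x y, t x = t y → d x = d y → x = y
  adj_iff : ∀ x y, G.Adj x y ↔ x ≠ y ∧ (t x = t y ∨ d x = d y)

/-- A property that passes along edges of a connected graph holds everywhere once it holds
somewhere. -/
lemma forall_of_connected {V : Type*} {G : SimpleGraph V} (hc : G.Connected) (P : V → Prop)
    (hP : ∀ x y, G.Adj x y → P x → P y) {v : V} (hv : P v) (w : V) : P w := by
  obtain ⟨p⟩ := hc.preconnected v w
  induction p with
  | nil => exact hv
  | cons h _ ih => exact ih (hP _ _ h hv)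

namespace IsTriangleInflation

variable {V A B : Type*} [Fintype V] [DecidableEq A] [DecidableEq B]
  {G : SimpleGraph V} {t : V → A} {d : V → B}

/-- The other half of the multigraph edge containing the half-edge `x`. -/
lemma exists_mate (h : IsTriangleInflation G t d) (x : V) :
    ∃ y, y ≠ x ∧ ∀ z, d z = d x ↔ z = x ∨ z = y := by
  classical
  obtain ⟨u, v, huv, hs⟩ := Finset.card_eq_two.1 (h.card_d (d x))
  have key : ∀ z, d z = d x ↔ z = u ∨ z = v := fun z => by
    have := congrArg (z ∈ ·) hs
    simpa using this
  rcases (key x).1 rfl with rfl | rfl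
  · exact ⟨v, huv.symm, key⟩
  · exact ⟨u, huv, fun z => by rw [key, or_comm]⟩

/-- The other two vertices of the triangle of `x`, with sums over this triangle made explicit. -/
lemma exists_triangle (h : IsTriangleInflation G t d) (x : V) :
    ∃ y z, y ≠ x ∧ z ≠ x ∧ y ≠ z ∧ (∀ w, t w = t x ↔ w = x ∨ w = y ∨ w = z) ∧
      ∀ g : V → ZMod 2, ∑ w with t w = t x, g w = g x + g y + g z := by
  classical
  obtain ⟨u, v, w, huv, huw, hvw, hs⟩ := Finset.card_eq_three.1 (h.card_t (t x))
  have key : ∀ z, t z = t x ↔ z = u ∨ z = v ∨ z = w := fun z => by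
    have := congrArg (z ∈ ·) hs
    simpa using this
  have hsum : ∀ g : V → ZMod 2, ∑ w with t w = t x, g w = g u + g v + g w := fun g => by
    rw [hs, Finset.sum_insert (by simp [huv, huw]), Finset.sum_pair hvw, add_assoc]
  rcases (key x).1 rfl with rfl | rfl | rfl
  · exact ⟨v, w, huv.symm, huw.symm, hvw, key, hsum⟩
  · exact ⟨u, w, huv, hvw.symm, huw, fun z => by rw [key]; tauto, fun g => by rw [hsum]; ring⟩
  · exact ⟨u, v, huw, hvw, huv, fun z => by rw [key]; tauto, fun g => by rw [hsum]; ring⟩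

/-- The `T`-joins of the multigraph, with `T` the set of all vertices: the edge sets, encoded by
their characteristic functions over `ZMod 2`, that have odd degree at every vertex. -/
def joins (t : V → A) (d : V → B) : Set (B → ZMod 2) :=
  {s | ∀ a, ∑ x with t x = a, s (d x) = 1}

open Classical in
/-- The trace of a subgraph of `G` on the multigraph: the characteristic function of the multigraph
edges whose two half-edges it joins. -/
noncomputable def trace (d : V → B) (M : G.Subgraph) (b : B) : ZMod 2 :=
  if ∃ x y, d x = b ∧ d y = b ∧ M.Adj x y then 1 else 0

/-- The trace of `M` at the multigraph edge of `x` is read off from the unique partner `m` of `x`. -/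
lemma trace_eq_one_iff (h : IsTriangleInflation G t d) {M : G.Subgraph} {x m : V} (hm : M.Adj x m)
    (hu : ∀ y, M.Adj x y → y = m) : trace d M (d x) = 1 ↔ d m = d x := by
  classical
  have : (∃ u v, d u = d x ∧ d v = d x ∧ M.Adj u v) ↔ d m = d x := by
    constructor
    · rintro ⟨u, v, hu', hv', huv⟩
      obtain ⟨y, -, hy⟩ := h.exists_mate x
      have hne := huv.ne
      rcases (hy u).1 hu' with rfl | rfl
      · rwa [← hu _ huv]
      · rcases (hy v).1 hv' with rfl | rfl
        · rwa [← hu _ huv.symm]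
        · exact absurd rfl hne
    · exact fun hd => ⟨x, m, rfl, hd, hm⟩
  rw [← this]
  simp [trace]

lemma zmod2_cases (a : ZMod 2) : a = 0 ∨ a = 1 := by
  revert a; decide

/-- A perfect matching matches an even number of the three vertices of each triangle inside the
triangle, so its trace has degree `1` or `3` at every vertex of the multigraph. -/
lemma trace_mem_joins (h : IsTriangleInflation G t d) {M : G.Subgraph} (hM : M.IsPerfectMatching) :
    trace d M ∈ joins t d := by
  classical
  rw [Subgraph.isPerfectMatching_iff] at hM
  choose m hm hu using hM
  have htr : ∀ x, trace d M (d x) = 1 ↔ d (m x) = d x := fun x =>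
    h.trace_eq_one_iff (hm x) (hu x)
  have hmm : ∀ x, m (m x) = x := fun x => (hu (m x) x (hm x).symm).symm
  have hne : ∀ x, m x ≠ x := fun x => (hm x).ne.symm
  have hadj : ∀ x, t x = t (m x) ∨ d x = d (m x) := fun x => ((h.adj_iff _ _).1 (hm x).adj_sub).2
  intro a
  have hpos : 0 < (Finset.univ.filter (fun x => t x = a)).card := by rw [h.card_t]; norm_num
  obtain ⟨x, hx⟩ := Finset.card_pos.1 hpos
  obtain rfl : t x = a := by simpa using hx
  -- The nonzero terms come from the vertices matched inside the triangle, and the matching is a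
  -- fixed-point-free involution on these.
  have h0 : ∑ p with t p = t x, (trace d M (d p) + 1) = 0 := by
    have : ∑ p with t p = t x, (trace d M (d p) + 1)
        = ∑ p with t p = t x ∧ d (m p) ≠ d p, (1 : ZMod 2) := by
      rw [← Finset.filter_filter, Finset.sum_filter (fun p => d (m p) ≠ d p)]
      refine Finset.sum_congr rfl fun p _ => ?_
      by_cases hp : d (m p) = d p
      · rw [(htr p).2 hp, if_neg (by simpa using hp)]; decide
      · rw [(zmod2_cases _).resolve_right (mt (htr p).1 hp), if_pos hp, zero_add]
    rw [this]
    refine Finset.sum_involution (fun p _ => m p) ?_ ?_ ?_ ?_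
    · intros; decide
    · intro p _ _; exact hne p
    · intro p hp
      simp only [Finset.mem_filter, Finset.mem_univ, true_and] at hp ⊢
      refine ⟨?_, by rw [hmm]; exact hp.2.symm⟩
      rw [← hp.1]
      exact ((hadj p).resolve_right (fun q => hp.2 q.symm)).symm
    · intro p _; exact hmm p
  rw [Finset.sum_add_distrib] at h0
  have h3 : ∑ p with t p = t x, (1 : ZMod 2) = 1 := by
    rw [Finset.sum_const, h.card_t]; decide
  rw [h3] at h0
  rcases zmod2_cases (∑ p with t p = t x, trace d M (d p)) with q | q
  · rw [q] at h0; exact absurd h0 (by decide)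
  · exact q

/-- A perfect matching is determined by its trace: the trace tells which vertices are matched along
their multigraph edge, and inside a triangle at most one pair remains to be matched. -/
lemma adj_of_trace_eq (h : IsTriangleInflation G t d) {M M' : G.Subgraph}
    (hM : M.IsPerfectMatching) (hM' : M'.IsPerfectMatching) (he : trace d M = trace d M')
    {x y : V} (hxy : M.Adj x y) : M'.Adj x y := by
  rw [Subgraph.isPerfectMatching_iff] at hM hM'
  choose m hm hu using hM
  choose m' hm' hu' using hM'
  have htr : ∀ x, d (m x) = d x ↔ d (m' x) = d x := fun x => by
    rw [← h.trace_eq_one_iff (hm x) (hu x), ← h.trace_eq_one_iff (hm' x) (hu' x), he]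
  have hadj' : ∀ x, t x = t (m' x) ∨ d x = d (m' x) :=
    fun x => ((h.adj_iff _ _).1 (hm' x).adj_sub).2
  have hmm' : ∀ x, m' (m' x) = x := fun x => (hu' (m' x) x (hm' x).symm).symm
  have hne' : ∀ x, m' x ≠ x := fun x => (hm' x).ne.symm
  have hne := hxy.ne
  obtain rfl : y = m x := hu _ _ hxy
  have hmx : m (m x) = x := (hu (m x) x (hm x).symm).symm
  suffices m' x = m x by rw [← this]; exact hm' x
  by_cases hd : d (m x) = d x
  · obtain ⟨y, -, hy⟩ := h.exists_mate x
    have h1 := (hy _).1 hd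
    have h2 := (hy _).1 ((htr x).1 hd)
    have := hne' x
    grind
  · have ht : t x = t (m x) := ((h.adj_iff _ _).1 hxy.adj_sub).2.resolve_right (Ne.symm hd)
    have hd' : d (m' x) ≠ d x := mt (htr x).2 hd
    have hd2 : d (m' (m x)) ≠ d (m x) := mt (htr (m x)).2 (by rw [hmx]; exact Ne.symm hd)
    have ht1 : t x = t (m' x) := (hadj' x).resolve_right (Ne.symm hd')
    have ht2 : t (m x) = t (m' (m x)) := (hadj' (m x)).resolve_right (Ne.symm hd2)
    obtain ⟨y, z, -, -, -, hy, -⟩ := h.exists_triangle x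
    have e1 := (hy (m x)).1 ht.symm
    have e2 := (hy (m' x)).1 ht1.symm
    have e3 := (hy (m' (m x))).1 (by rw [← ht2, ht])
    have := hne' x
    have := hne' (m x)
    have := hmm' x
    have := hmm' (m x)
    grind

/-- The subgraph with prescribed trace `s`: the edges of the multigraph lying in `s`, together with
the triangle edges whose ends are missed by them. -/
def ofJoin (h : IsTriangleInflation G t d) (s : B → ZMod 2) : G.Subgraph where
  verts := Set.univ
  Adj x y := x ≠ y ∧ ((d x = d y ∧ s (d x) = 1) ∨ (t x = t y ∧ s (d x) = 0 ∧ s (d y) = 0))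
  adj_sub := fun hxy => (h.adj_iff _ _).2 ⟨hxy.1, hxy.2.elim (fun q => .inr q.1)
    (fun q => .inl q.1)⟩
  edge_vert := fun _ => Set.mem_univ _
  symm := ⟨fun _ _ hxy => ⟨hxy.1.symm, hxy.2.elim (fun q => .inl ⟨q.1.symm, q.1 ▸ q.2⟩)
    (fun q => .inr ⟨q.1.symm, q.2.2, q.2.1⟩)⟩⟩

lemma ofJoin_isPerfectMatching (h : IsTriangleInflation G t d) {s : B → ZMod 2}
    (hs : s ∈ joins t d) : (h.ofJoin s).IsPerfectMatching := by
  rw [Subgraph.isPerfectMatching_iff]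
  intro x
  simp only [ofJoin]
  rcases zmod2_cases (s (d x)) with h0 | h1
  · obtain ⟨y, z, hyx, hzx, hyz, hy, hsum⟩ := h.exists_triangle x
    have hsx := hs (t x)
    rw [hsum (fun w => s (d w)), h0, zero_add] at hsx
    have ty := (hy y).2 (by simp)
    have tz := (hy z).2 (by simp)
    rcases zmod2_cases (s (d y)) with y0 | y1
    · have z1 : s (d z) = 1 := by simpa [y0] using hsx
      refine ⟨y, by simp [*, Ne.symm hyx], ?_⟩
      rintro w ⟨hw, (⟨-, q⟩ | ⟨q, -, q'⟩)⟩
      · simp [h0] at q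
      · rcases (hy w).1 q.symm with rfl | rfl | rfl
        · exact absurd rfl hw
        · rfl
        · simp [z1] at q'
    · have z0 : s (d z) = 0 := by simpa [y1] using hsx
      refine ⟨z, by simp [*, Ne.symm hzx], ?_⟩
      rintro w ⟨hw, (⟨-, q⟩ | ⟨q, -, q'⟩)⟩
      · simp [h0] at q
      · rcases (hy w).1 q.symm with rfl | rfl | rfl
        · exact absurd rfl hw
        · simp [y1] at q'
        · rfl
  · obtain ⟨y, hyx, hy⟩ := h.exists_mate x
    have dy := (hy y).2 (by simp)
    refine ⟨y, ⟨hyx.symm, .inl ⟨dy.symm, h1⟩⟩, ?_⟩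
    rintro w ⟨hw, (⟨q, -⟩ | ⟨-, q, -⟩)⟩
    · exact ((hy w).1 q.symm).resolve_left hw.symm
    · simp [h1] at q

lemma trace_ofJoin (h : IsTriangleInflation G t d) (s : B → ZMod 2) :
    trace d (h.ofJoin s) = s := by
  classical
  funext b
  have : (∃ x y, d x = b ∧ d y = b ∧ (h.ofJoin s).Adj x y) ↔ s b = 1 := by
    constructor
    · rintro ⟨x, y, rfl, hy, hne, (⟨-, q⟩ | ⟨q, -⟩)⟩
      · exact q
      · exact absurd (h.inj x y q hy.symm) hne
    · intro hb
      have hpos : 0 < (Finset.univ.filter (fun x => d x = b)).card := by rw [h.card_d]; norm_num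
      obtain ⟨x, hx⟩ := Finset.card_pos.1 hpos
      obtain rfl : d x = b := by simpa using hx
      obtain ⟨y, hyx, hy⟩ := h.exists_mate x
      have dy := (hy y).2 (by simp)
      exact ⟨x, y, rfl, dy, hyx.symm, .inl ⟨dy.symm, hb⟩⟩
  simp only [trace, this]
  rcases zmod2_cases (s b) with q | q <;> simp [q]

lemma numPM_eq (h : IsTriangleInflation G t d) : numPM G = (joins t d).ncard := by
  refine Set.ncard_congr (fun M _ => trace d M) (fun M hM => h.trace_mem_joins hM) ?_ ?_
  · intro M M' hM hM' he
    have hM1 : M.IsPerfectMatching := hM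
    have hM2 : M'.IsPerfectMatching := hM'
    refine Subgraph.ext ?_ ?_
    · rw [Subgraph.isSpanning_iff.1 hM1.2, Subgraph.isSpanning_iff.1 hM2.2]
    · funext x y
      exact propext ⟨h.adj_of_trace_eq hM hM' he, h.adj_of_trace_eq hM' hM he.symm⟩
  · exact fun s hs => ⟨h.ofJoin s, h.ofJoin_isPerfectMatching hs, h.trace_ofJoin s⟩

/-! ### Counting joins over `ZMod 2` -/

/-- The incidence matrix over `ZMod 2` of the multigraph. -/
def inc (t : V → A) (d : V → B) : Matrix A B (ZMod 2) :=
  fun a b => ∑ x, if t x = a ∧ d x = b then 1 else 0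

lemma inc_mulVec [Fintype B] (s : B → ZMod 2) (a : A) :
    (inc t d).mulVec s a = ∑ x with t x = a, s (d x) := by
  simp only [Matrix.mulVec, dotProduct, inc, Finset.sum_mul]
  rw [Finset.sum_comm, Finset.sum_filter]
  refine Finset.sum_congr rfl fun x _ => ?_
  by_cases hx : t x = a <;> simp [hx]

lemma inc_transpose_mulVec [Fintype A] (f : A → ZMod 2) (b : B) :
    (inc t d).transpose.mulVec f b = ∑ x with d x = b, f (t x) := by
  rw [← inc_mulVec (t := d) (d := t)]
  congr 1
  ext b a
  simp [inc, and_comm]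

/-- A function on the vertices of the multigraph that takes the same value at the two ends of every
edge is constant, by connectedness. -/
lemma ker_transpose [Fintype A] (h : IsTriangleInflation G t d) (hc : G.Connected) [Fintype B] :
    LinearMap.ker (inc t d).transpose.mulVecLin = Submodule.span (ZMod 2) {fun _ => 1} := by
  classical
  ext f
  rw [LinearMap.mem_ker, Submodule.mem_span_singleton]
  constructor
  · intro hf
    have hd : ∀ x y, d x = d y → f (t x) = f (t y) := by
      intro x y hxy
      by_cases hne : x = y
      · rw [hne]
      have h1 := congrFun hf (d x)
      rw [Matrix.mulVecLin_apply, inc_transpose_mulVec] at h1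
      obtain ⟨z, hz, hz'⟩ := h.exists_mate x
      have : Finset.univ.filter (fun w => d w = d x) = {x, z} := by ext w; simp [hz']
      rw [this, Finset.sum_pair hz.symm] at h1
      obtain rfl : y = z := ((hz' y).1 hxy.symm).resolve_left (Ne.symm hne)
      have : ∀ a b : ZMod 2, a + b = 0 → a = b := by decide
      exact this _ _ h1
    obtain ⟨v⟩ := hc.nonempty
    refine ⟨f (t v), ?_⟩
    funext a
    have hpos : 0 < (Finset.univ.filter (fun x => t x = a)).card := by rw [h.card_t]; norm_num
    obtain ⟨x, hx⟩ := Finset.card_pos.1 hpos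
    obtain rfl : t x = a := by simpa using hx
    have := forall_of_connected hc (fun x => f (t x) = f (t v)) (fun x y hxy hx => by
      rw [← hx]
      rcases ((h.adj_iff x y).1 hxy).2 with q | q
      · rw [q]
      · exact (hd x y q).symm) (v := v) rfl x
    simp [this]
  · rintro ⟨c, rfl⟩
    funext b
    rw [Matrix.mulVecLin_apply, inc_transpose_mulVec]
    simp only [Pi.smul_apply, smul_eq_mul, mul_one, Finset.sum_const, h.card_d]
    exact (by decide : ∀ c : ZMod 2, 2 • c = 0) c

/-- The joins are the solutions of an affine system over `ZMod 2` whose matrix has rank `|A| - 1`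
and whose column space is the space of vectors with coordinate sum `0`. The all-ones vector lies in
it because `3 * |A| = 2 * |B|` makes `|A|` even, so the joins form a coset of the cycle space, which
has dimension `|B| - |A| + 1`. -/
lemma ncard_joins [Fintype A] [Fintype B] (h : IsTriangleInflation G t d) (hc : G.Connected) :
    (joins t d).ncard = 2 ^ (Fintype.card V / 6 + 1) ∧ 6 ∣ Fintype.card V := by
  classical
  have hVA : Fintype.card V = 3 * Fintype.card A := by
    rw [← Finset.card_univ, Finset.card_eq_sum_card_fiberwise (f := t) (t := Finset.univ)
      (by simp [Set.MapsTo])]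
    simp [h.card_t, mul_comm]
  have hVB : Fintype.card V = 2 * Fintype.card B := by
    rw [← Finset.card_univ, Finset.card_eq_sum_card_fiberwise (f := d) (t := Finset.univ)
      (by simp [Set.MapsTo])]
    simp [h.card_d, mul_comm]
  obtain ⟨v⟩ := hc.nonempty
  set L := (inc t d).mulVecLin with hL
  have hkerT : Module.finrank (ZMod 2) (LinearMap.ker (inc t d).transpose.mulVecLin) = 1 := by
    rw [h.ker_transpose hc]
    exact finrank_span_singleton (fun q => by simpa using congrFun q (t v))
  have hrT := LinearMap.finrank_range_add_finrank_ker (inc t d).transpose.mulVecLin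
  rw [hkerT, Module.finrank_fintype_fun_eq_card] at hrT
  have hrank : Module.finrank (ZMod 2) (LinearMap.range L) + 1 = Fintype.card A := by
    have : Module.finrank (ZMod 2) (LinearMap.range (inc t d).transpose.mulVecLin)
      = Module.finrank (ZMod 2) (LinearMap.range L) := Matrix.rank_transpose (inc t d)
    omega
  have hker := LinearMap.finrank_range_add_finrank_ker L
  rw [Module.finrank_fintype_fun_eq_card] at hker
  let S : (A → ZMod 2) →ₗ[ZMod 2] ZMod 2 := ∑ a, LinearMap.proj a
  have hS : ∀ f, S f = ∑ a, f a := fun f => by simp [S]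
  -- Each multigraph edge has two ends, so coordinate sums vanish on the range of `L`.
  have hle : LinearMap.range L ≤ LinearMap.ker S := by
    rintro _ ⟨s, rfl⟩
    rw [LinearMap.mem_ker, hS]
    simp only [hL, Matrix.mulVecLin_apply, inc_mulVec]
    rw [Finset.sum_fiberwise, ← Finset.sum_fiberwise _ d]
    refine Finset.sum_eq_zero fun b _ => ?_
    rw [Finset.sum_congr rfl (g := fun _ => s b) (fun x hx => by rw [(Finset.mem_filter.1 hx).2]),
      Finset.sum_const, h.card_d]
    generalize s b = c
    revert c; decide
  have hSr : 0 < Module.finrank (ZMod 2) (LinearMap.range S) := by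
    rw [Module.finrank_pos_iff_exists_ne_zero]
    refine ⟨⟨S (Pi.single (t v) 1), _, rfl⟩, fun q => ?_⟩
    have := congrArg Subtype.val q
    simp [hS] at this
  have hSk := LinearMap.finrank_range_add_finrank_ker S
  rw [Module.finrank_fintype_fun_eq_card] at hSk
  have heq : LinearMap.range L = LinearMap.ker S :=
    Submodule.eq_of_le_of_finrank_le hle (by omega)
  have hone : (fun _ => 1 : A → ZMod 2) ∈ Set.range L := by
    have : (fun _ => 1 : A → ZMod 2) ∈ LinearMap.range L := by
      rw [heq, LinearMap.mem_ker, hS]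
      have : Even (Fintype.card A) := by
        rw [Nat.even_iff]; omega
      simpa using (ZMod.natCast_eq_zero_iff_even).2 this
    exact this
  have hj : joins t d = ↑(Finset.univ.filter (fun s => L s = fun _ => 1)) := by
    ext s
    simp [joins, hL, funext_iff, inc_mulVec]
  refine ⟨?_, by omega⟩
  rw [hj, Set.ncard_coe_finset, AddMonoidHom.card_fiber_eq_of_mem_range L hone ⟨0, map_zero L⟩]
  have : (Finset.univ.filter (fun s => L s = 0)).card = Fintype.card (LinearMap.ker L) := by
    rw [Fintype.card_subtype]; simp
  rw [this, Module.card_eq_pow_finrank (K := ZMod 2), ZMod.card]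
  congr 1
  omega

end IsTriangleInflation

/-! ### Cubic line graphs are triangle inflations -/

/-- A realisation of `G` as the line graph of `H`, with `E x` the edge of `H` that the vertex `x` of
`G` stands for. -/
structure IsLineRealization {V W : Type*} (G : SimpleGraph V) (H : SimpleGraph W)
    (E : V → Sym2 W) : Prop where
  inj : Function.Injective E
  range : Set.range E = H.edgeSet
  adj_iff : ∀ x y, G.Adj x y ↔ x ≠ y ∧ ∃ w, w ∈ E x ∧ w ∈ E y

lemma IsLineRealization.of_iso {V W : Type*} {G : SimpleGraph V} {H : SimpleGraph W}
    (φ : G ≃g H.lineGraph) : IsLineRealization G H (fun x => (φ x : Sym2 W)) where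
  inj := fun x y hxy => φ.injective (Subtype.ext hxy)
  range := by
    ext e
    constructor
    · rintro ⟨x, rfl⟩; exact (φ x).2
    · intro he; exact ⟨φ.symm ⟨e, he⟩, by simp⟩
  adj_iff := fun x y => by
    rw [← φ.map_adj_iff, lineGraph_adj_iff_exists, φ.injective.ne_iff]

namespace IsLineRealization

variable {V W : Type*} {G : SimpleGraph V} {H : SimpleGraph W} {E : V → Sym2 W}

lemma mem_edgeSet (h : IsLineRealization G H E) (x : V) : E x ∈ H.edgeSet :=
  h.range ▸ Set.mem_range_self x

variable [Fintype V] [Fintype W] [DecidableEq W] [DecidableRel H.Adj]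

lemma card_incident (h : IsLineRealization G H E) (w : W) :
    (Finset.univ.filter (fun x => w ∈ E x)).card = H.degree w := by
  rw [← card_incidenceFinset_eq_degree, ← Finset.card_image_of_injective _ h.inj]
  congr 1
  ext e
  simp only [Finset.mem_image, Finset.mem_filter, Finset.mem_univ, true_and, mem_incidenceFinset,
    incidenceSet, ← h.range, Set.mem_range]
  grind

variable [DecidableRel G.Adj]

/-- The edges at `u` and those at `v` have only `uv` in common, and together they are `uv` and its
neighbours in the line graph. -/
lemma degree_add_degree (h : IsLineRealization G H E) {x : V} {u v : W} (hx : E x = s(u, v)) :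
    H.degree u + H.degree v = G.degree x + 2 := by
  classical
  have huv : u ≠ v := by
    have := h.mem_edgeSet x
    rw [hx, SimpleGraph.mem_edgeSet] at this
    exact this.ne
  rw [← h.card_incident, ← h.card_incident, ← Finset.card_union_add_card_inter]
  have h1 : (Finset.univ.filter (fun y => u ∈ E y) ∩ Finset.univ.filter (fun y => v ∈ E y)) =
      {x} := by
    ext y
    simp only [Finset.mem_inter, Finset.mem_filter, Finset.mem_univ, true_and,
      Finset.mem_singleton]
    rw [Sym2.mem_and_mem_iff huv, ← hx, h.inj.eq_iff]
  have h2 : (Finset.univ.filter (fun y => u ∈ E y) ∪ Finset.univ.filter (fun y => v ∈ E y)) =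
      insert x (G.neighborFinset x) := by
    ext y
    simp only [Finset.mem_union, Finset.mem_filter, Finset.mem_univ, true_and,
      Finset.mem_insert, mem_neighborFinset, h.adj_iff, hx, Sym2.mem_iff]
    by_cases hyx : y = x
    · subst hyx; simp [hx]
    · grind
  rw [h1, h2, Finset.card_insert_of_notMem (by simp), card_neighborFinset_eq_degree]
  simp

/-- A vertex of degree `4` in `H` would have only leaves as neighbours, so that `H` would be a star
with four edges and `G` would be `K₄`. -/
lemma degree_ne_four (h : IsLineRealization G H E) (hc : G.Connected)
    (h3 : ∀ x, G.degree x = 3) (hV : 4 < Fintype.card V) {x : V} {u : W} (hu : u ∈ E x) :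
    H.degree u ≠ 4 := by
  intro h4
  have hall : ∀ y, u ∈ E y := by
    refine forall_of_connected hc (fun y => u ∈ E y) (fun y z hyz hy => ?_) hu
    obtain ⟨hne, w, hwy, hwz⟩ := (h.adj_iff y z).1 hyz
    by_contra hz
    have hwu : w ≠ u := by rintro rfl; exact hz hwz
    have hE : E y = s(u, w) := (Sym2.mem_and_mem_iff hwu.symm).1 ⟨hy, hwy⟩
    have hd := h.degree_add_degree hE
    rw [h3, h4, ← h.card_incident w] at hd
    have : 1 < (Finset.univ.filter (fun x => w ∈ E x)).card :=
      Finset.one_lt_card.2 ⟨y, by simpa using hwy, z, by simpa using hwz, hne⟩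
    omega
  have := h.card_incident u
  rw [Finset.filter_true_of_mem (fun y _ => hall y), Finset.card_univ] at this
  omega

lemma exists_ends (h : IsLineRealization G H E) (hc : G.Connected)
    (h3 : ∀ x, G.degree x = 3) (hV : 4 < Fintype.card V) (x : V) :
    ∃ u v, E x = s(u, v) ∧ H.degree u = 3 ∧ H.degree v = 2 := by
  obtain ⟨u, v, hx⟩ : ∃ u v, E x = s(u, v) := by
    induction E x with | _ u v => exact ⟨u, v, rfl⟩
  have hd := h.degree_add_degree hx
  rw [h3] at hd
  have hadj : H.Adj u v := by
    have := h.mem_edgeSet x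
    rwa [hx, SimpleGraph.mem_edgeSet] at this
  have hu := hadj.degree_pos_left
  have hv := hadj.degree_pos_right
  have hu4 : H.degree u ≠ 4 := h.degree_ne_four hc h3 hV (x := x) (by simp [hx])
  have hv4 : H.degree v ≠ 4 := h.degree_ne_four hc h3 hV (x := x) (by simp [hx])
  by_cases hu3 : H.degree u = 3
  · exact ⟨u, v, hx, hu3, by omega⟩
  · exact ⟨v, u, by rw [hx, Sym2.eq_swap], by omega, by omega⟩

/-- Every edge of `H` joins a vertex of degree `3` to one of degree `2`: thus `H` is the subdivision
of a cubic multigraph, and its line graph is the triangle inflation of that multigraph. -/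
lemma exists_inflation (h : IsLineRealization G H E) (hc : G.Connected)
    (h3 : ∀ x, G.degree x = 3) (hV : 4 < Fintype.card V) :
    ∃ (t : V → {w // H.degree w = 3}) (d : V → {w // H.degree w = 2}),
      IsTriangleInflation G t d := by
  choose t d hE ht hd using h.exists_ends hc h3 hV
  have hmt : ∀ x w, H.degree w = 3 → (w ∈ E x ↔ t x = w) := fun x w hw => by
    rw [hE, Sym2.mem_iff]
    have : w ≠ d x := by rintro rfl; rw [hd] at hw; omega
    grind
  have hmd : ∀ x w, H.degree w = 2 → (w ∈ E x ↔ d x = w) := fun x w hw => by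
    rw [hE, Sym2.mem_iff]
    have : w ≠ t x := by rintro rfl; rw [ht] at hw; omega
    grind
  refine ⟨fun x => ⟨t x, ht x⟩, fun x => ⟨d x, hd x⟩, ?_, ?_, ?_, ?_⟩
  · rintro ⟨w, hw⟩
    refine Eq.trans ?_ ((h.card_incident w).trans hw)
    simp [hmt _ _ hw]
  · rintro ⟨w, hw⟩
    refine Eq.trans ?_ ((h.card_incident w).trans hw)
    simp [hmd _ _ hw]
  · intro x y hxt hxd
    apply h.inj
    rw [hE, hE, Subtype.mk.inj hxt, Subtype.mk.inj hxd]
  · intro x y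
    rw [h.adj_iff, Subtype.mk.injEq, Subtype.mk.injEq]
    refine and_congr_right fun _ => ⟨?_, ?_⟩
    · rintro ⟨w, hwx, hwy⟩
      rw [hE, Sym2.mem_iff] at hwx
      rcases hwx with rfl | rfl
      · exact .inl ((hmt y _ (ht x)).1 hwy).symm
      · exact .inr ((hmd y _ (hd x)).1 hwy).symm
    · rintro (q | q)
      · exact ⟨t x, (hmt x _ (ht x)).2 rfl, (hmt y _ (ht x)).2 q.symm⟩
      · exact ⟨d x, (hmd x _ (hd x)).2 rfl, (hmd y _ (hd x)).2 q.symm⟩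

end IsLineRealization

/-- Let `G` be a finite connected cubic simple graph with `ν > 4` vertices which is a line
graph (i.e. isomorphic to `L(H)` for some finite simple graph `H`). Then the number of
perfect matchings of `G` equals `2 ^ (ν / 6 + 1)`, and `6 ∣ ν`. -/
theorem perfectMatchings_of_cubic_lineGraph
    {V : Type*} [Fintype V] (G : SimpleGraph V) [DecidableRel G.Adj]
    (hconn : G.Connected)
    (hcubic : ∀ v : V, G.degree v = 3)
    (hline : ∃ (W : Type) (_ : Fintype W) (H : SimpleGraph W), Nonempty (G ≃g H.lineGraph))
    (hν : 4 < Fintype.card V) :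
    numPM G = 2 ^ (Fintype.card V / 6 + 1) ∧ 6 ∣ Fintype.card V := by
  classical
  obtain ⟨W, _, H, ⟨φ⟩⟩ := hline
  obtain ⟨t, d, h⟩ := (IsLineRealization.of_iso φ).exists_inflation hconn hcubic hν
  rw [h.numPM_eq]
  exact h.ncard_joins hconn
end

section
/- Let G be a finite simple graph, u a vertex of G, and let the neighborhood N(u) of u be partitioned into two disjoint sets X and Y. Let G' be the graph obtained from G by splitting the vertex u, namely: G' has vertex set {v ∈ V(G) : v ≠ u} ⊕ {u', u'', x}, its adjacencies among vertices of V(G)\{u} are those of G, the new vertex x is adjacent exactly to u' and u'', u' is adjacent exactly to x and to every vertex of X, and u'' is adjacent exactly to x and to every vertex of Y. Then the number of perfect matchings of G equals the number of perfect matchings of G'. -/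
/-!
Let `u'`, `u''`, `x` be the three new vertices. In a perfect matching of the split graph the
vertex `x` is matched to exactly one of `u'`, `u''`; the other one is then matched to an old
vertex, and contracting `u'`, `x`, `u''` to `u` gives a perfect matching of `G`. Conversely, a
perfect matching of `G` matches `u` to a vertex of exactly one of `X` and `Y`, which decides which
of `u'`, `u''` inherits that edge, and `x` has to be matched to the other. The two constructions
(`splitMatching` and `contractMatching`) are mutually inverse on perfect matchings.
-/

open SimpleGraph

/-- The graph `G'` obtained from `G` by splitting the vertex `u` according to a partition
`X ∪ Y` of the neighborhood of `u`.  Its vertices are the vertices of `G` other than `u`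
together with three new vertices `u' = Sum.inr 0`, `u'' = Sum.inr 1` and `x = Sum.inr 2`.
Adjacencies among old vertices are those of `G`; `x` is adjacent exactly to `u'` and `u''`;
`u'` is adjacent exactly to `x` and to every vertex of `X`; and `u''` is adjacent exactly to
`x` and to every vertex of `Y`. -/
def splitVertex {V : Type*} (G : SimpleGraph V) (u : V) (X Y : Set V) :
    SimpleGraph ({v : V // v ≠ u} ⊕ Fin 3) :=
  SimpleGraph.fromRel (fun a b =>
    (∃ v w : {v : V // v ≠ u}, a = Sum.inl v ∧ b = Sum.inl w ∧ G.Adj v w) ∨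
    (∃ v : {v : V // v ≠ u}, a = Sum.inl v ∧ b = Sum.inr 0 ∧ (v : V) ∈ X) ∨
    (∃ v : {v : V // v ≠ u}, a = Sum.inl v ∧ b = Sum.inr 1 ∧ (v : V) ∈ Y) ∨
    (a = Sum.inr 0 ∧ b = Sum.inr 2) ∨
    (a = Sum.inr 1 ∧ b = Sum.inr 2))

namespace SplitVertex

variable {V : Type*} {G : SimpleGraph V} {u : V} {X Y : Set V}

/-! ### Adjacency in the split graph -/

lemma adj_inl_inl (v w : {v : V // v ≠ u}) :
    (splitVertex G u X Y).Adj (Sum.inl v) (Sum.inl w) ↔ G.Adj v w := by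
  have h := G.ne_of_adj (a := v) (b := w)
  simp only [splitVertex, SimpleGraph.fromRel_adj]
  grind [G.adj_comm v w]

lemma adj_inl_inr (v : {v : V // v ≠ u}) (i : Fin 3) :
    (splitVertex G u X Y).Adj (Sum.inl v) (Sum.inr i) ↔
      (i = 0 ∧ (v : V) ∈ X) ∨ (i = 1 ∧ (v : V) ∈ Y) := by
  simp only [splitVertex, SimpleGraph.fromRel_adj]
  grind

lemma adj_inr_inr (i j : Fin 3) :
    (splitVertex G u X Y).Adj (Sum.inr i) (Sum.inr j) ↔
      (i ≠ 2 ∧ j = 2) ∨ (i = 2 ∧ j ≠ 2) := by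
  simp only [splitVertex, SimpleGraph.fromRel_adj]
  fin_cases i <;> fin_cases j <;> simp

/-! ### Splitting and contracting subgraphs -/

/-- The old vertex `v` lies in the part of `N(u)` attached to the new vertex `i`: this is `X` for
`u' = 0` and `Y` for `u'' = 1`; nothing is attached to `x = 2`. -/
def Part (X Y : Set V) (i : Fin 3) (v : V) : Prop :=
  (i = 0 ∧ v ∈ X) ∨ (i = 1 ∧ v ∈ Y)

/-- The vertex `u` is matched by `M` into the part attached to the new vertex `i`. -/
def UsesPart (X Y : Set V) (M : G.Subgraph) (i : Fin 3) : Prop :=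
  ∃ v, M.Adj u v ∧ Part X Y i v

/-- Adjacency in the matching of the split graph induced by `M`. An edge `u v` of `M` is moved to
the copy of `u` that is adjacent to `v`, and `x` is matched to the copy that does not
receive this edge. -/
def splitAdj (X Y : Set V) (M : G.Subgraph) :
    {v : V // v ≠ u} ⊕ Fin 3 → {v : V // v ≠ u} ⊕ Fin 3 → Prop
  | Sum.inl v, Sum.inl w => M.Adj v w
  | Sum.inl v, Sum.inr i => M.Adj u v ∧ Part X Y i v
  | Sum.inr i, Sum.inl v => M.Adj u v ∧ Part X Y i v
  | Sum.inr i, Sum.inr j =>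
      (i ≠ 2 ∧ j = 2 ∧ ¬ UsesPart (u := u) X Y M i) ∨
        (i = 2 ∧ j ≠ 2 ∧ ¬ UsesPart (u := u) X Y M j)

/-- The spanning subgraph of the split graph induced by a subgraph `M` of `G`. -/
def splitMatching (X Y : Set V) (M : G.Subgraph) : (splitVertex G u X Y).Subgraph where
  verts := Set.univ
  Adj := splitAdj X Y M
  adj_sub := by
    rintro (v | i) (w | j) h
    · exact (adj_inl_inl v w).2 (M.adj_sub h)
    · exact (adj_inl_inr v j).2 h.2
    · exact ((adj_inl_inr w i).2 h.2).symm
    · rw [adj_inr_inr]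
      simp only [splitAdj] at h
      tauto
  edge_vert := fun _ => Set.mem_univ _
  symm := ⟨by
    rintro (v | i) (w | j) h
    · exact M.adj_symm h
    · exact h
    · exact h
    · simp only [splitAdj] at h ⊢
      tauto⟩

/-- The contraction sends every old vertex to itself and all new vertices to `u`. -/
def contract : {v : V // v ≠ u} ⊕ Fin 3 → V :=
  Sum.elim Subtype.val fun _ => u

@[simp] lemma contract_inl (v : {v : V // v ≠ u}) : contract (Sum.inl v) = v.1 := rfl

@[simp] lemma contract_inr (i : Fin 3) : contract (u := u) (Sum.inr i) = u := rfl

/-- The spanning subgraph of `G` whose edges are the images under `contract` of the edges of `N`,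
with the edges between new vertices (which contract to loops) discarded. -/
def contractMatching (hXY : X ∪ Y = G.neighborSet u) (N : (splitVertex G u X Y).Subgraph) :
    G.Subgraph where
  verts := Set.univ
  Adj v w := v ≠ w ∧ ∃ a b, N.Adj a b ∧ contract a = v ∧ contract b = w
  adj_sub := by
    have key : ∀ v : V, (v ∈ X ∨ v ∈ Y) → G.Adj u v := fun v hv => by
      have : v ∈ X ∪ Y := hv
      rwa [hXY] at this
    rintro v w ⟨hne, a, b, h, rfl, rfl⟩
    have h' := N.adj_sub h
    rcases a with v | i <;> rcases b with w | j
    · exact (adj_inl_inl v w).1 h'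
    · exact (key v (((adj_inl_inr v j).1 h').imp And.right And.right)).symm
    · exact key w (((adj_inl_inr w i).1 h'.symm).imp And.right And.right)
    · exact absurd rfl hne
  edge_vert := fun _ => Set.mem_univ _
  symm := ⟨by
    rintro v w ⟨hne, a, b, h, ha, hb⟩
    exact ⟨hne.symm, b, a, h.symm, hb, ha⟩⟩

/-! ### The edges of a contraction and the parts of `N(u)` -/

lemma contract_adj_old (hXY : X ∪ Y = G.neighborSet u) (N : (splitVertex G u X Y).Subgraph)
    (v w : {v : V // v ≠ u}) :
    (contractMatching hXY N).Adj v w ↔ N.Adj (Sum.inl v) (Sum.inl w) := by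
  constructor
  · rintro ⟨hne, a, b, h, ha, hb⟩
    rcases a with a | i
    · rcases b with b | j
      · rw [contract_inl] at ha hb
        rwa [← Subtype.ext ha, ← Subtype.ext hb]
      · exact absurd hb.symm w.2
    · exact absurd ha.symm v.2
  · intro h
    exact ⟨fun e => (N.adj_sub h).ne (congrArg Sum.inl (Subtype.ext e)), _, _, h, rfl, rfl⟩

lemma contract_adj_u (hXY : X ∪ Y = G.neighborSet u) (N : (splitVertex G u X Y).Subgraph)
    (v : {v : V // v ≠ u}) :
    (contractMatching hXY N).Adj u v ↔ ∃ i, N.Adj (Sum.inr i) (Sum.inl v) := by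
  constructor
  · rintro ⟨hne, a, b, h, ha, hb⟩
    rcases a with a | i
    · exact absurd ha a.2
    · rcases b with b | j
      · rw [contract_inl] at hb
        exact ⟨i, by rwa [← Subtype.ext hb]⟩
      · exact absurd hb.symm v.2
  · rintro ⟨i, h⟩
    exact ⟨v.2.symm, _, _, h, rfl, rfl⟩

lemma part_of_adj {N : (splitVertex G u X Y).Subgraph} {i : Fin 3} {v : {v : V // v ≠ u}}
    (h : N.Adj (Sum.inr i) (Sum.inl v)) : Part X Y i v :=
  (adj_inl_inr v i).1 (N.adj_sub h).symm

lemma Part.eq (hdisj : Disjoint X Y) {i j : Fin 3} {v : V} (hi : Part X Y i v)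
    (hj : Part X Y j v) : i = j := by
  have : v ∈ X → v ∉ Y := fun h => Set.disjoint_left.1 hdisj h
  unfold Part at hi hj
  grind

lemma exists_part (hXY : X ∪ Y = G.neighborSet u) {M : G.Subgraph} {v : V} (h : M.Adj u v) :
    ∃ i, Part X Y i v := by
  have : v ∈ X ∪ Y := by rw [hXY]; exact M.adj_sub h
  exact this.elim (fun h => ⟨0, .inl ⟨rfl, h⟩⟩) fun h => ⟨1, .inr ⟨rfl, h⟩⟩

lemma Part.ne_two {i : Fin 3} {v : V} (h : Part X Y i v) : i ≠ 2 := by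
  unfold Part at h
  grind

/-- For each new vertex `i ≠ 2` of a perfect matching of the split graph, `i` is matched to `x = 2`
exactly when it is not matched to an old vertex. -/
lemma adj_two_iff {N : (splitVertex G u X Y).Subgraph} (hN : N.IsPerfectMatching) {i : Fin 3}
    (hi : i ≠ 2) :
    N.Adj (Sum.inr i) (Sum.inr 2) ↔ ¬ ∃ v, N.Adj (Sum.inr i) (Sum.inl v) := by
  obtain ⟨w, hw, huniq⟩ := Subgraph.isPerfectMatching_iff.1 hN (Sum.inr i)
  constructor
  · rintro h ⟨v, hv⟩
    cases (huniq _ h).trans (huniq _ hv).symm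
  · intro h
    rcases w with v | j
    · exact absurd ⟨v, hw⟩ h
    · rcases (adj_inr_inr i j).1 (N.adj_sub hw) with h' | h'
      · rwa [← h'.2]
      · exact absurd h'.1 hi

/-! ### The two constructions are mutually inverse -/

lemma contract_split (hXY : X ∪ Y = G.neighborSet u) {M : G.Subgraph}
    (hM : M.IsPerfectMatching) :
    contractMatching hXY (splitMatching X Y M) = M := by
  have hu : ∀ v, v ≠ u →
      ((contractMatching hXY (splitMatching X Y M)).Adj u v ↔ M.Adj u v) := fun v hv => by
    rw [contract_adj_u hXY _ ⟨v, hv⟩]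
    exact ⟨fun ⟨_, h⟩ => h.1, fun h => (exists_part hXY h).imp fun _ hi => ⟨h, hi⟩⟩
  refine Subgraph.ext (Set.eq_univ_of_forall hM.2).symm ?_
  ext v w
  by_cases hv : v = u
  · subst hv
    by_cases hw : w = v
    · subst hw
      exact ⟨fun h => absurd rfl h.1, fun h => absurd rfl h.ne⟩
    · exact hu w hw
  · by_cases hw : w = u
    · subst hw
      rw [Subgraph.adj_comm, hu v hv, Subgraph.adj_comm]
    · exact contract_adj_old hXY _ ⟨v, hv⟩ ⟨w, hw⟩

lemma split_contract (hXY : X ∪ Y = G.neighborSet u) (hdisj : Disjoint X Y)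
    {N : (splitVertex G u X Y).Subgraph} (hN : N.IsPerfectMatching) :
    splitMatching X Y (contractMatching hXY N) = N := by
  have hmix : ∀ (i : Fin 3) (v : {v : V // v ≠ u}),
      ((contractMatching hXY N).Adj u v ∧ Part X Y i v) ↔ N.Adj (Sum.inr i) (Sum.inl v) := by
    intro i v
    rw [contract_adj_u]
    constructor
    · rintro ⟨⟨j, hj⟩, hi⟩
      rwa [hi.eq hdisj (part_of_adj hj)]
    · exact fun h => ⟨⟨i, h⟩, part_of_adj h⟩
  have huse : ∀ i : Fin 3, UsesPart (u := u) X Y (contractMatching hXY N) i ↔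
      ∃ v, N.Adj (Sum.inr i) (Sum.inl v) := by
    intro i
    constructor
    · rintro ⟨v, h⟩
      exact ⟨⟨v, h.1.ne.symm⟩, (hmix i ⟨v, h.1.ne.symm⟩).1 h⟩
    · rintro ⟨v, h⟩
      exact ⟨v, (hmix i v).2 h⟩
  refine Subgraph.ext (Set.eq_univ_of_forall hN.2).symm ?_
  ext a b
  rcases a with v | i <;> rcases b with w | j
  · exact contract_adj_old hXY N v w
  · exact (hmix j v).trans (N.adj_comm _ _)
  · exact hmix i w
  · change (_ ∧ _ ∧ _) ∨ (_ ∧ _ ∧ _) ↔ _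
    rw [huse, huse]
    constructor
    · rintro (⟨hi, rfl, h⟩ | ⟨rfl, hj, h⟩)
      · exact (adj_two_iff hN hi).2 h
      · exact ((adj_two_iff hN hj).2 h).symm
    · intro h
      rcases (adj_inr_inr i j).1 (N.adj_sub h) with ⟨hi, rfl⟩ | ⟨rfl, hj⟩
      · exact .inl ⟨hi, rfl, (adj_two_iff hN hi).1 h⟩
      · exact .inr ⟨rfl, hj, (adj_two_iff hN hj).1 h.symm⟩

/-! ### Perfect matchings are preserved -/

lemma split_isPerfectMatching (hXY : X ∪ Y = G.neighborSet u) (hdisj : Disjoint X Y)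
    {M : G.Subgraph} (hM : M.IsPerfectMatching) :
    (splitMatching (u := u) X Y M).IsPerfectMatching := by
  rw [Subgraph.isPerfectMatching_iff] at hM ⊢
  -- `t` is the partner of `u`, and `k` is the copy of `u` that receives the edge to `t`.
  obtain ⟨t, ht, htu⟩ := hM u
  obtain ⟨k, hk⟩ := exists_part hXY ht
  have huse : ∀ i, UsesPart (u := u) X Y M i ↔ i = k := by
    intro i
    constructor
    · rintro ⟨v, hv, hp⟩
      rw [htu v hv] at hp
      exact hp.eq hdisj hk
    · rintro rfl
      exact ⟨t, ht, hk⟩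
  have hrr : ∀ i j, (splitMatching X Y M).Adj (Sum.inr i : {v : V // v ≠ u} ⊕ Fin 3) (Sum.inr j) ↔
      (i ≠ 2 ∧ j = 2 ∧ i ≠ k) ∨ (i = 2 ∧ j ≠ 2 ∧ j ≠ k) := by
    intro i j
    change (_ ∧ _ ∧ ¬ _) ∨ (_ ∧ _ ∧ ¬ _) ↔ _
    rw [huse, huse]
  have hlr : ∀ (v : {v : V // v ≠ u}) i,
      (splitMatching X Y M).Adj (Sum.inr i) (Sum.inl v) ↔ v = t ∧ i = k := by
    intro v i
    constructor
    · rintro ⟨h, hp⟩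
      have := htu v h
      rw [this] at hp
      exact ⟨this, hp.eq hdisj hk⟩
    · rintro ⟨h, rfl⟩
      refine ⟨?_, ?_⟩ <;> rwa [h]
  have hk2 := hk.ne_two
  rintro (v | i)
  · obtain ⟨w, hw, hwu⟩ := hM v
    by_cases hwe : w = u
    · subst hwe
      have hvt := htu v hw.symm
      refine ⟨Sum.inr k, ((hlr v k).2 ⟨hvt, rfl⟩).symm, ?_⟩
      rintro (y | j) hy
      · exact absurd (hwu y hy) y.2
      · rw [((hlr v j).1 hy.symm).2]
    · refine ⟨Sum.inl ⟨w, hwe⟩, hw, ?_⟩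
      rintro (y | j) hy
      · exact congrArg Sum.inl (Subtype.ext (hwu y hy))
      · exact absurd (hwu u hy.1.symm).symm hwe
  · by_cases hik : i = k
    · subst hik
      refine ⟨Sum.inl ⟨t, ht.ne.symm⟩, (hlr _ _).2 ⟨rfl, rfl⟩, ?_⟩
      rintro (y | j) hy
      · exact congrArg Sum.inl (Subtype.ext ((hlr y i).1 hy).1)
      · have := (hrr _ _).1 hy
        tauto
    · -- The new vertices other than `k` are `2` and exactly one more, which are matched together.
      have hex : ∃ j : Fin 3, ∀ l,
          ((i ≠ 2 ∧ l = 2 ∧ i ≠ k) ∨ (i = 2 ∧ l ≠ 2 ∧ l ≠ k)) ↔ l = j := by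
        clear hrr hlr huse hk
        revert i k
        decide
      obtain ⟨j, hj⟩ := hex
      refine ⟨Sum.inr j, (hrr i j).2 ((hj j).2 rfl), ?_⟩
      rintro (y | l) hy
      · exact absurd ((hlr y i).1 hy).2 hik
      · rw [(hj l).1 ((hrr i l).1 hy)]

lemma contract_isPerfectMatching (hXY : X ∪ Y = G.neighborSet u)
    {N : (splitVertex G u X Y).Subgraph} (hN : N.IsPerfectMatching) :
    (contractMatching hXY N).IsPerfectMatching := by
  have hN' := Subgraph.isPerfectMatching_iff.1 hN
  rw [Subgraph.isPerfectMatching_iff]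
  intro v
  by_cases hv : v = u
  · subst hv
    -- `x = 2` is matched to a copy `i` of the split vertex, so the other copy `k` has an old partner.
    have hik : ∃ i k : Fin 3, k ≠ 2 ∧ N.Adj (Sum.inr 2) (Sum.inr i) ∧ k ≠ i ∧
        ∀ l, l ≠ 2 → l ≠ k → l = i := by
      obtain ⟨w, hw, -⟩ := hN' (Sum.inr 2)
      rcases w with w | i
      · exact absurd rfl (part_of_adj hw).ne_two
      · have hi : i ≠ 2 := by
          rintro rfl
          exact hw.ne rfl
        have hex : ∃ k : Fin 3, k ≠ 2 ∧ k ≠ i ∧ ∀ l, l ≠ 2 → l ≠ k → l = i := by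
          clear hw
          revert i
          decide
        obtain ⟨k, h1, h2, h3⟩ := hex
        exact ⟨i, k, h1, hw, h2, h3⟩
    obtain ⟨i, k, hk2, h2i, hki, hl⟩ := hik
    obtain ⟨t, ht⟩ : ∃ t, N.Adj (Sum.inr k) (Sum.inl t) := by
      by_contra h
      have := hN.1.eq_of_adj_left h2i ((adj_two_iff hN hk2).2 h).symm
      exact hki (Sum.inr.inj this).symm
    refine ⟨t, (contract_adj_u hXY N t).2 ⟨k, ht⟩, fun y hy => ?_⟩
    obtain ⟨l, hly⟩ := (contract_adj_u hXY N ⟨y, hy.ne.symm⟩).1 hy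
    have hlk : l = k := by
      by_contra hne
      have := hl l (part_of_adj hly).ne_two hne
      subst this
      cases hN.1.eq_of_adj_left hly h2i.symm
    subst hlk
    exact congrArg Subtype.val (Sum.inl.inj (hN.1.eq_of_adj_left hly ht))
  · obtain ⟨w, hw, hwu⟩ := hN' (Sum.inl ⟨v, hv⟩)
    refine ⟨contract w, ?_, ?_⟩
    · rcases w with w | i
      · exact (contract_adj_old hXY N ⟨v, hv⟩ w).2 hw
      · exact ((contract_adj_u hXY N ⟨v, hv⟩).2 ⟨i, hw.symm⟩).symm
    · rintro y ⟨-, a, b, h, ha, rfl⟩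
      rcases a with a | i
      · have : a = ⟨v, hv⟩ := Subtype.ext ha
        subst this
        rw [hwu b h]
      · exact absurd ha.symm hv

end SplitVertex

/-- Splitting a vertex preserves the number of perfect matchings: if the neighborhood of `u`
in `G` is partitioned into disjoint sets `X` and `Y`, then `G` and the split graph `G'` have
the same number of perfect matchings. -/
theorem numPM_splitVertex
    {V : Type*} [Fintype V] (G : SimpleGraph V) (u : V) (X Y : Set V)
    (hXY : X ∪ Y = G.neighborSet u) (hdisj : Disjoint X Y) :
    numPM G = numPM (splitVertex G u X Y) := by
  exact Set.BijOn.ncard_eq (f := SplitVertex.splitMatching X Y) <|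
    Set.InvOn.bijOn (f' := SplitVertex.contractMatching hXY)
      ⟨fun _ hM => SplitVertex.contract_split hXY hM,
        fun _ hN => SplitVertex.split_contract hXY hdisj hN⟩
      (fun _ hM => SplitVertex.split_isPerfectMatching hXY hdisj hM)
      (fun _ hN => SplitVertex.contract_isPerfectMatching hXY hN)
end

section
/- Let G be a finite connected simple graph with an even number of edges, let e = (u,v) be an edge of G with d_G(u) ≥ 2 and d_G(v) ≥ 2, and let s ≥ 0 be an integer. Let G_s be the graph obtained from G by subdividing the edge e exactly 2s times. Then the number of perfect matchings of G equals the number of perfect matchings of G_s. -/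
/-!
A perfect matching is the same thing as a fixed-point-free involution `f` of the vertex set that
sends every vertex to a neighbour (`numPM_eq_ncard`), so it suffices to biject these involutions
on `G` with those on the subdivided graph.

When `s > 0`, write `w₀, …, w_{2s-1}` for the new vertices. In a perfect matching of the
subdivided graph, the partner of `u` decides how the whole path is matched. If `u` is matched to
`w₀`, then `w₁w₂, w₃w₄, …` are forced, and finally `w_{2s-1}v`, because the number of new vertices
is even (`matching_path_on`). Otherwise `w₀w₁, w₂w₃, …` are forced (`matching_path_off`), and `u`
and `v` are matched to old vertices; `matching_ends` sums up both cases. The first case corresponds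
to the matchings of `G` that contain `uv`, the second to those that avoid it. The two directions of
the correspondence are `extendMatching` and `restrictMatching`. For `s = 0` the graphs are isomorphic.
-/

open SimpleGraph

/-- The graph obtained from `G` by subdividing the edge `(u,v)` exactly `k` times, i.e.
replacing the edge `(u,v)` by a path `u — w₀ — w₁ — ⋯ — w_{k-1} — v` through `k` new
vertices.  (For `k = 0` this is `G` itself.) -/
def subdivideEdge {V : Type*} (G : SimpleGraph V) (u v : V) (k : ℕ) :
    SimpleGraph (V ⊕ Fin k) :=
  SimpleGraph.fromRel (fun a b =>
    (∃ x y : V, a = Sum.inl x ∧ b = Sum.inl y ∧ G.Adj x y ∧ (s(x, y) ≠ s(u, v) ∨ k = 0)) ∨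
    (∃ i : Fin k, a = Sum.inl u ∧ b = Sum.inr i ∧ (i : ℕ) = 0) ∨
    (∃ i : Fin k, a = Sum.inl v ∧ b = Sum.inr i ∧ (i : ℕ) = k - 1) ∨
    (∃ i j : Fin k, a = Sum.inr i ∧ b = Sum.inr j ∧ (j : ℕ) = (i : ℕ) + 1))

/-! ### Perfect matchings as involutions -/

/-- Perfect matchings of `G`, encoded as the involution sending each vertex to its partner. -/
def matchingMaps {V : Type*} (G : SimpleGraph V) : Set (V → V) :=
  {f | ∀ x, f (f x) = x ∧ G.Adj x (f x)}

theorem numPM_eq_ncard {V : Type*} (G : SimpleGraph V) :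
    numPM G = (matchingMaps G).ncard := by
  symm
  refine Set.ncard_congr (fun f hf =>
    { verts := Set.univ
      Adj := fun a b => f a = b
      adj_sub := fun {a b} h => h ▸ (hf a).2
      edge_vert := fun _ => trivial
      symm := ⟨fun a b h => h ▸ (hf a).1⟩ }) ?_ ?_ ?_
  · intro f hf
    exact ⟨fun x _ => ⟨f x, rfl, fun y (hy : f x = y) => hy.symm⟩, fun x => trivial⟩
  · intro f g hf hg h
    have h' := congrArg SimpleGraph.Subgraph.Adj h
    funext x
    have hx : g x = f x := (congrFun (congrFun h' x) (f x)).mp rfl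
    exact hx.symm
  · intro M hM
    rw [Set.mem_ofPred_eq, SimpleGraph.Subgraph.isPerfectMatching_iff] at hM
    choose f hf hf' using hM
    refine ⟨f, fun x => ⟨(hf' _ _ (hf x).symm).symm, (hf x).adj_sub⟩, ?_⟩
    ext a b
    · simpa using M.edge_vert (hf a)
    · exact ⟨fun h => h ▸ hf a, fun h => (hf' _ _ h).symm⟩

/-! ### Adjacency in the subdivided graph -/

section Adjacency

variable {V : Type*} {G : SimpleGraph V} {u v : V} {k : ℕ}

theorem subdivideEdge_adj_inl_inl {x y : V} :
    (subdivideEdge G u v k).Adj (Sum.inl x) (Sum.inl y) ↔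
      G.Adj x y ∧ (s(x, y) ≠ s(u, v) ∨ k = 0) := by
  constructor
  · rintro ⟨-, h⟩
    rcases h with h | h
    · simpa using h
    · simp only [Sum.inl.injEq, reduceCtorEq, false_and, and_false, exists_false, or_false] at h
      obtain ⟨a, b, rfl, rfl, h1, h2⟩ := h
      exact ⟨h1.symm, by rwa [Sym2.eq_swap]⟩
  · intro h
    exact ⟨by simpa using h.1.ne, Or.inl (Or.inl ⟨x, y, rfl, rfl, h⟩)⟩

theorem subdivideEdge_adj_inl_inr {x : V} {i : Fin k} :
    (subdivideEdge G u v k).Adj (Sum.inl x) (Sum.inr i) ↔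
      (x = u ∧ (i : ℕ) = 0) ∨ (x = v ∧ (i : ℕ) = k - 1) := by
  simp [subdivideEdge]

theorem subdivideEdge_adj_inr_inl {x : V} {i : Fin k} :
    (subdivideEdge G u v k).Adj (Sum.inr i) (Sum.inl x) ↔
      (x = u ∧ (i : ℕ) = 0) ∨ (x = v ∧ (i : ℕ) = k - 1) := by
  rw [SimpleGraph.adj_comm, subdivideEdge_adj_inl_inr]

theorem subdivideEdge_adj_inr_inr {i j : Fin k} :
    (subdivideEdge G u v k).Adj (Sum.inr i) (Sum.inr j) ↔
      (j : ℕ) = i + 1 ∨ (i : ℕ) = j + 1 := by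
  constructor
  · rintro ⟨-, h⟩
    rcases h with h | h
    · left
      simpa using h
    · right
      simpa using h
  · intro h
    refine ⟨fun e => ?_, ?_⟩
    · obtain rfl := Sum.inr.inj e
      omega
    · rcases h with h | h
      · exact Or.inl (Or.inr (Or.inr (Or.inr ⟨i, j, rfl, rfl, h⟩)))
      · exact Or.inr (Or.inr (Or.inr (Or.inr ⟨j, i, rfl, rfl, h⟩)))

end Adjacency

/-! ### Matchings along the path -/

/-- The pairing `w₀w₁, w₂w₃, …` of the new vertices among themselves. -/
def pathOff {s : ℕ} (i : Fin (2 * s)) : Fin (2 * s) :=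
  if h : (i : ℕ) % 2 = 0 then ⟨i + 1, by omega⟩ else ⟨i - 1, by omega⟩

/-- The pairing `uw₀, w₁w₂, …, w_{2s-1}v`, as seen from the new vertices. -/
def pathOn {V : Type*} (u v : V) {s : ℕ} (i : Fin (2 * s)) : V ⊕ Fin (2 * s) :=
  if (i : ℕ) = 0 then Sum.inl u
  else if (i : ℕ) % 2 = 0 then Sum.inr ⟨i - 1, by omega⟩
  else if h : (i : ℕ) + 1 < 2 * s then Sum.inr ⟨i + 1, h⟩ else Sum.inl v

section Forcing

variable {V : Type*} {G : SimpleGraph V} {u v : V} {s : ℕ}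
  {g : V ⊕ Fin (2 * s) → V ⊕ Fin (2 * s)}

/-- If `u` is not matched into the path, the new vertices are matched among themselves: walking
along the path from `u`, each new vertex is either already taken by its predecessor or must take
its successor. -/
theorem matching_path_off (hg : g ∈ matchingMaps (subdivideEdge G u v (2 * s)))
    (h : ∀ i, g (Sum.inl u) ≠ Sum.inr i) (i : Fin (2 * s)) :
    g (Sum.inr i) = Sum.inr (pathOff i) := by
  obtain ⟨n, hn⟩ := i
  induction n with
  | zero =>
    have h1 := hg (Sum.inr ⟨0, hn⟩)
    rcases hx : g (Sum.inr ⟨0, hn⟩) with x | j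
    · rw [hx, subdivideEdge_adj_inr_inl] at h1
      rcases h1 with ⟨h1, ⟨rfl, -⟩ | ⟨-, h2⟩⟩
      · exact absurd h1 (h _)
      · simp only at h2
        omega
    · rw [hx, subdivideEdge_adj_inr_inr] at h1
      simp only [pathOff, Sum.inr.injEq, Fin.ext_iff] at h1 ⊢
      simp
      omega
  | succ n ih =>
    have ih := ih (by omega)
    have h0 := hg (Sum.inr ⟨n, by omega⟩)
    rw [ih] at h0
    by_cases hp : n % 2 = 0
    · have e1 : pathOff ⟨n, by omega⟩ = (⟨n + 1, hn⟩ : Fin (2 * s)) := by simp [pathOff, hp]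
      have e2 : pathOff ⟨n + 1, by omega⟩ = (⟨n, by omega⟩ : Fin (2 * s)) := by
        simp [pathOff]; omega
      rw [e1] at h0
      rw [h0.1, e2]
    · have h1 := hg (Sum.inr ⟨n + 1, hn⟩)
      rcases hx : g (Sum.inr ⟨n + 1, hn⟩) with x | j
      · rw [hx, subdivideEdge_adj_inr_inl] at h1
        simp only at h1
        omega
      · rw [hx, subdivideEdge_adj_inr_inr] at h1
        -- `wₙ` is already matched to its predecessor.
        have hj : (j : ℕ) ≠ n := by
          rintro rfl
          have := h1.1
          rw [ih] at this
          simp only [pathOff, Sum.inr.injEq, Fin.ext_iff] at this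
          rw [dif_neg hp] at this
          simp only at this
          omega
        simp only [pathOff, Sum.inr.injEq, Fin.ext_iff] at h1 ⊢
        rw [dif_pos (by omega)]
        simp only
        omega

/-- If `u` is matched into the path, the matching along the path is forced; the last new vertex has
odd index, so it is left for `v`. -/
theorem matching_path_on (hg : g ∈ matchingMaps (subdivideEdge G u v (2 * s))) (huv : u ≠ v)
    {i₀ : Fin (2 * s)} (h : g (Sum.inl u) = Sum.inr i₀) (i : Fin (2 * s)) :
    g (Sum.inr i) = pathOn u v i := by
  have hi₀ : (i₀ : ℕ) = 0 := by
    have := (hg (Sum.inl u)).2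
    rw [h, subdivideEdge_adj_inl_inr] at this
    simpa [huv] using this
  obtain ⟨n, hn⟩ := i
  induction n with
  | zero =>
    have e : (⟨0, hn⟩ : Fin (2 * s)) = i₀ := Fin.ext hi₀.symm
    rw [e, ← h, (hg _).1]
    simp [pathOn, hi₀]
  | succ n ih =>
    have ih := ih (by omega)
    have h0 := hg (Sum.inr ⟨n, by omega⟩)
    rw [ih] at h0
    by_cases hp : n % 2 = 0
    · have h1 := hg (Sum.inr ⟨n + 1, hn⟩)
      have hp' : (n + 1) % 2 ≠ 0 := by omega
      rcases hx : g (Sum.inr ⟨n + 1, hn⟩) with x | j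
      · rw [hx, subdivideEdge_adj_inr_inl] at h1
        rcases h1.2 with ⟨-, h2⟩ | ⟨rfl, h2⟩
        · simp at h2
        · simp only at h2
          simp only [pathOn, hp', if_false, Nat.succ_ne_zero]
          rw [dif_neg (by omega)]
      · rw [hx, subdivideEdge_adj_inr_inr] at h1
        -- `wₙ` is already matched to its predecessor, or to `u` when `n = 0`.
        have hj : (j : ℕ) ≠ n := by
          rintro rfl
          have := h1.1
          rw [ih] at this
          simp only [pathOn, hp] at this
          split_ifs at this
          simp only [Sum.inr.injEq, Fin.ext_iff] at this
          omega
        have hj' : (j : ℕ) = n + 2 := by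
          have := h1.2
          simp only at this
          omega
        simp only [pathOn, hp', if_false, Nat.succ_ne_zero]
        rw [dif_pos (by omega)]
        simp [Fin.ext_iff, hj']
    · have e1 : pathOn u v (⟨n, by omega⟩ : Fin (2 * s)) = Sum.inr ⟨n + 1, hn⟩ := by
        have : n ≠ 0 := by omega
        simp [pathOn, hp, hn, this]
      have e2 : pathOn u v (⟨n + 1, hn⟩ : Fin (2 * s)) = Sum.inr ⟨n, by omega⟩ := by
        have : (n + 1) % 2 = 0 := by omega
        simp [pathOn, this]
      rw [e1] at h0
      rw [h0.1, e2]

end Forcing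

/-! ### The correspondence -/

open Classical in
/-- Extends a matching of `G` to the subdivided graph: `uv` is replaced by the pairing `pathOn`
if it belongs to the matching, and otherwise the pairing `pathOff` is added. -/
noncomputable def extendMatching {V : Type*} (u v : V) {s : ℕ} (hs : 0 < s) (f : V → V) :
    V ⊕ Fin (2 * s) → V ⊕ Fin (2 * s)
  | Sum.inl x =>
    if f u = v ∧ x = u then Sum.inr ⟨0, by omega⟩
    else if f u = v ∧ x = v then Sum.inr ⟨2 * s - 1, by omega⟩
    else Sum.inl (f x)
  | Sum.inr i => if f u = v then pathOn u v i else Sum.inr (pathOff i)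

open Classical in
/-- Restricts a matching of the subdivided graph to `G`: an endpoint of `uv` that is matched to a
new vertex is matched to the other endpoint instead. -/
noncomputable def restrictMatching {V : Type*} (u v : V) {s : ℕ}
    (g : V ⊕ Fin (2 * s) → V ⊕ Fin (2 * s)) (x : V) : V :=
  match g (Sum.inl x) with
  | Sum.inl y => y
  | Sum.inr _ => if x = u then v else u

section Correspondence

variable {V : Type*} {G : SimpleGraph V} {u v : V} {s : ℕ}

theorem extendMatching_mem (huv : G.Adj u v) (hs : 0 < s) {f : V → V} (hf : f ∈ matchingMaps G) :
    extendMatching u v hs f ∈ matchingMaps (subdivideEdge G u v (2 * s)) := by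
  have huv' := huv.ne
  by_cases h : f u = v
  · have h' : f v = u := by rw [← h]; exact (hf u).1
    rintro (x | i)
    · by_cases hxu : x = u
      · subst hxu
        simp [extendMatching, h, pathOn, subdivideEdge_adj_inl_inr]
      by_cases hxv : x = v
      · subst hxv
        have h1 : 2 * s - 1 ≠ 0 := by omega
        have h2 : (2 * s - 1) % 2 ≠ 0 := by omega
        have h3 : ¬ (2 * s - 1 + 1 < 2 * s) := by omega
        simp only [extendMatching, h, pathOn]
        simp [h1, h2, h3, hxu, h, subdivideEdge_adj_inl_inr]
      · have h1 : f x ≠ u := fun e => hxv (by rw [← (hf x).1, e, h])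
        have h2 : f x ≠ v := fun e => hxu (by rw [← (hf x).1, e, h'])
        simp [extendMatching, h, hxu, hxv, h1, h2, subdivideEdge_adj_inl_inl, hf x]
    · obtain ⟨n, hn⟩ := i
      simp only [extendMatching, h, if_true, pathOn]
      split_ifs with h1 h2 h3
      · simp [h, h1, subdivideEdge_adj_inr_inl]
      · have h4 : (n - 1) % 2 ≠ 0 := by omega
        have h5 : n - 1 ≠ 0 := by omega
        have h6 : n - 1 + 1 = n := by omega
        simp [subdivideEdge_adj_inr_inr, h4, h5, h6, hn]
      · have h4 : (n + 1) % 2 = 0 := by omega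
        simp [subdivideEdge_adj_inr_inr, h4]
      · have h4 : n = 2 * s - 1 := by omega
        simp [h, huv'.symm, subdivideEdge_adj_inr_inl, h4]
  · have h' : f v ≠ u := fun e => h (by rw [← e]; exact (hf v).1)
    rintro (x | i)
    · simp only [extendMatching, h, false_and, if_false, (hf x).1, true_and,
        subdivideEdge_adj_inl_inl, (hf x).2]
      left
      intro e
      rcases Sym2.eq_iff.mp e with ⟨rfl, e'⟩ | ⟨rfl, e'⟩
      · exact h e'
      · exact h' e'
    · obtain ⟨n, hn⟩ := i
      simp only [extendMatching, h, if_false, subdivideEdge_adj_inr_inr, pathOff, Sum.inr.injEq,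
        Fin.ext_iff]
      by_cases hp : n % 2 = 0
      · have hq : (n + 1) % 2 ≠ 0 := by omega
        simp [hp, hq]
      · have hq : (n - 1) % 2 = 0 := by omega
        simp [hp, hq]
        omega

theorem restrict_extend (huv : G.Adj u v) (hs : 0 < s) {f : V → V} (hf : f ∈ matchingMaps G) :
    restrictMatching u v (extendMatching u v hs f) = f := by
  have huv' := huv.ne
  funext x
  by_cases h : f u = v
  · have h' : f v = u := by rw [← h]; exact (hf u).1
    by_cases hxu : x = u
    · subst hxu
      simp [restrictMatching, extendMatching, h]
    by_cases hxv : x = v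
    · subst hxv
      simp [restrictMatching, extendMatching, h, h', hxu]
    · simp [restrictMatching, extendMatching, hxu, hxv]
  · simp [restrictMatching, extendMatching, h]

/-- In a matching of the subdivided graph, either `u` and `v` are both matched to the
corresponding ends of the path, or no old vertex is matched into the path. -/
theorem matching_ends (huv : u ≠ v) (hs : 0 < s) {g : V ⊕ Fin (2 * s) → V ⊕ Fin (2 * s)}
    (hg : g ∈ matchingMaps (subdivideEdge G u v (2 * s))) :
    (g (Sum.inl u) = Sum.inr ⟨0, by omega⟩ ∧ g (Sum.inl v) = Sum.inr ⟨2 * s - 1, by omega⟩ ∧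
      (∀ x, x ≠ u → x ≠ v → ∃ y, g (Sum.inl x) = Sum.inl y) ∧
      ∀ i, g (Sum.inr i) = pathOn u v i) ∨
    ((∀ x, ∃ y, g (Sum.inl x) = Sum.inl y) ∧ ∀ i, g (Sum.inr i) = Sum.inr (pathOff i)) := by
  by_cases h : ∃ i, g (Sum.inl u) = Sum.inr i
  · left
    obtain ⟨i₀, h⟩ := h
    have hp := matching_path_on hg huv h
    refine ⟨?_, ?_, fun x hxu hxv => ?_, hp⟩
    · have := hp ⟨0, by omega⟩
      rw [pathOn, if_pos rfl] at this
      rw [← this, (hg _).1]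
    · have := hp ⟨2 * s - 1, by omega⟩
      rw [pathOn, if_neg (by simp only; omega), if_neg (by simp only; omega),
        dif_neg (by simp only; omega)] at this
      rw [← this, (hg _).1]
    · rcases hx : g (Sum.inl x) with y | j
      · exact ⟨y, rfl⟩
      · have := (hg (Sum.inl x)).2
        rw [hx, subdivideEdge_adj_inl_inr] at this
        tauto
  · right
    push Not at h
    have hp := matching_path_off hg h
    refine ⟨fun x => ?_, hp⟩
    rcases hx : g (Sum.inl x) with y | j
    · exact ⟨y, rfl⟩
    · have := (hg (Sum.inl x)).1
      rw [hx, hp] at this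
      simp at this

theorem restrictMatching_mem (huv : G.Adj u v) (hs : 0 < s)
    {g : V ⊕ Fin (2 * s) → V ⊕ Fin (2 * s)}
    (hg : g ∈ matchingMaps (subdivideEdge G u v (2 * s))) :
    restrictMatching u v g ∈ matchingMaps G := by
  have huv' := huv.ne
  -- A vertex matched to an old vertex keeps its partner.
  have key : ∀ x y, g (Sum.inl x) = Sum.inl y →
      restrictMatching u v g (restrictMatching u v g x) = x ∧
        G.Adj x (restrictMatching u v g x) := by
    intro x y hy
    have h1 := hg (Sum.inl x)
    rw [hy, subdivideEdge_adj_inl_inl] at h1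
    simp [restrictMatching, hy, h1.1, h1.2.1]
  intro x
  rcases matching_ends huv' hs hg with ⟨h1, h2, h3, -⟩ | ⟨h1, -⟩
  · by_cases hxu : x = u
    · subst hxu
      simp [restrictMatching, h1, h2, huv, huv'.symm]
    by_cases hxv : x = v
    · subst hxv
      simp [restrictMatching, h1, h2, hxu, huv.symm]
    · obtain ⟨y, hy⟩ := h3 x hxu hxv
      exact key x y hy
  · obtain ⟨y, hy⟩ := h1 x
    exact key x y hy

theorem extend_restrict (huv : G.Adj u v) (hs : 0 < s)
    {g : V ⊕ Fin (2 * s) → V ⊕ Fin (2 * s)}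
    (hg : g ∈ matchingMaps (subdivideEdge G u v (2 * s))) :
    extendMatching u v hs (restrictMatching u v g) = g := by
  have huv' := huv.ne
  rcases matching_ends huv' hs hg with ⟨h1, h2, h3, h4⟩ | ⟨h1, h2⟩
  · have hu : restrictMatching u v g u = v := by simp [restrictMatching, h1]
    funext a
    rcases a with x | i
    · by_cases hxu : x = u
      · subst hxu
        simp [extendMatching, hu, h1]
      by_cases hxv : x = v
      · subst hxv
        simp [extendMatching, hu, h2, hxu]
      · obtain ⟨y, hy⟩ := h3 x hxu hxv
        simp [extendMatching, hxu, hxv, restrictMatching, hy]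
    · simp [extendMatching, hu, h4]
  · have hu : restrictMatching u v g u ≠ v := by
      obtain ⟨y, hy⟩ := h1 u
      have := (hg (Sum.inl u)).2
      rw [hy, subdivideEdge_adj_inl_inl] at this
      simp only [restrictMatching, hy]
      rintro rfl
      rcases this.2 with h | h
      · exact h rfl
      · omega
    funext a
    rcases a with x | i
    · obtain ⟨y, hy⟩ := h1 x
      simp only [extendMatching, hu, false_and, if_false]
      simp [restrictMatching, hy]
    · simp [extendMatching, hu, h2]

end Correspondence

/-! ### Equality of the counts -/

theorem numPM_congr {V W : Type*} {G : SimpleGraph V} {H : SimpleGraph W} (e : G ≃g H) :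
    numPM G = numPM H := by
  rw [numPM_eq_ncard, numPM_eq_ncard]
  refine Set.ncard_congr (fun f _ x => e (f (e.symm x))) ?_ ?_ ?_
  · intro f hf x
    refine ⟨by simp [(hf _).1], ?_⟩
    have := e.map_adj_iff.mpr (hf (e.symm x)).2
    simpa using this
  · intro f g _ _ h
    funext x
    simpa using congrFun h (e x)
  · intro g hg
    refine ⟨fun x => e.symm (g (e x)), fun x => ⟨by simp [(hg _).1], ?_⟩, by simp⟩
    have := e.symm.map_adj_iff.mpr (hg (e x)).2
    simpa using this

/-- Let `G` be a finite connected simple graph with an even number of edges, let `(u,v)` be an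
edge of `G` with both endpoints of degree at least 2, and let `s ≥ 0`.  Then `G` and the graph
`G_s` obtained from `G` by subdividing the edge `(u,v)` exactly `2s` times have the same
number of perfect matchings. -/
theorem numPM_subdivideEdge_even_times
    {V : Type*} [Fintype V] [DecidableEq V] (G : SimpleGraph V) [DecidableRel G.Adj]
    (hconn : G.Connected) (heven : Even G.edgeFinset.card)
    (u v : V) (huv : G.Adj u v)
    (hu : 2 ≤ G.degree u) (hv : 2 ≤ G.degree v) (s : ℕ) :
    numPM G = numPM (subdivideEdge G u v (2 * s)) := by
  rcases Nat.eq_zero_or_pos s with rfl | hs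
  · have : IsEmpty (Fin (2 * 0)) := by simpa using Fin.isEmpty
    exact numPM_congr
      { toEquiv := (Equiv.sumEmpty V (Fin (2 * 0))).symm
        map_rel_iff' := by simp [subdivideEdge_adj_inl_inl] }
  · rw [numPM_eq_ncard, numPM_eq_ncard]
    refine Set.ncard_congr (fun f _ => extendMatching u v hs f)
      (fun f hf => extendMatching_mem huv hs hf) ?_
      (fun g hg => ⟨restrictMatching u v g, restrictMatching_mem huv hs hg,
        extend_restrict huv hs hg⟩)
    intro f f' hf hf' h
    rw [← restrict_extend huv hs hf, h, restrict_extend huv hs hf']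
end

section
/- Let G be a finite connected simple graph with an even number of edges, let e = (u,v) be an edge of G with d_G(u) ≥ 2 and d_G(v) ≥ 2, and let s ≥ 0 be an integer. Let G_s be the graph obtained from G by subdividing the edge e exactly 2s times. Then the number of perfect matchings of the line graph L(G) equals the number of perfect matchings of the line graph L(G_s). -/
/-!
In the line graph of `G`, the neighbours of the vertex `e = s(u, v)` split into the edges through
`u` and the edges through `v`; no edge other than `e` is in both classes. Subdividing `e` into
`2s + 1` edges replaces this vertex by a path `a₀, …, a₂ₛ` in which `a₀` sees the first class,
`a₂ₛ` the second, and no interior vertex sees anything outside the path. As the path has an odd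
number of vertices, a perfect matching of the larger graph matches exactly one end of the path with
a vertex outside it, and the matching along the path is then forced. Contracting the path to a
single vertex is therefore a bijection between perfect matchings (`ncard_mates_path`).

Perfect matchings are handled as fixed-point-free involutions along edges (`mates`), and both line
graphs are transported to the vertex types `Option W` and `W ⊕ Fin (2s + 1)`, where `W` is the type
of edges of `G` other than `e`; `isPathExpansion_lineGraph` states that the line graphs are then
related as above.
-/

open SimpleGraph

/-! ### Perfect matchings as partner functions -/

/-- Perfect matchings of `H`, encoded as the functions sending each vertex to its partner. -/
def mates {α : Type*} (H : SimpleGraph α) : Set (α → α) :=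
  {f | ∀ x, H.Adj x (f x) ∧ f (f x) = x}

theorem numPM_eq_ncard_mates {α : Type*} (H : SimpleGraph α) : numPM H = (mates H).ncard := by
  symm
  refine Set.ncard_congr (fun f hf =>
    { verts := Set.univ
      Adj := fun x y => f x = y
      adj_sub := by rintro x _ rfl; exact (hf x).1
      edge_vert := by intros; trivial
      symm := ⟨by rintro x _ rfl; exact (hf x).2⟩ }) ?_ ?_ ?_
  · intro f hf
    rw [Set.mem_ofPred_eq, Subgraph.isPerfectMatching_iff]
    exact fun x => ⟨f x, rfl, fun y hy => Eq.symm (a := f x) hy⟩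
  · intro f g hf hg h
    funext x
    have := congrArg (fun M : H.Subgraph => M.Adj x (g x)) h
    simpa using this
  · intro M hM
    rw [Set.mem_ofPred_eq, Subgraph.isPerfectMatching_iff] at hM
    choose f hf hf' using hM
    refine ⟨f, fun x => ⟨M.adj_sub (hf x), (hf' _ _ (hf x).symm).symm⟩, ?_⟩
    have hv : M.verts = Set.univ := Set.eq_univ_of_forall fun x => M.edge_vert (hf x)
    ext x y
    · simp [hv]
    · exact ⟨fun h => by have h : f x = y := h; exact h ▸ hf x, fun h => (hf' _ _ h).symm⟩

theorem ncard_mates_comap {α β : Type*} (e : α ≃ β) (H : SimpleGraph β) :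
    (mates (H.comap e)).ncard = (mates H).ncard := by
  refine Set.ncard_congr (fun f _ => e ∘ f ∘ e.symm) ?_ ?_ ?_
  · intro f hf x
    have := hf (e.symm x)
    simpa [Equiv.eq_symm_apply] using this
  · intro f g _ _ h
    funext x
    simpa using congrFun h (e x)
  · intro g hg
    refine ⟨e.symm ∘ g ∘ e, fun x => ?_, ?_⟩
    · have := hg (e x)
      simpa [Equiv.symm_apply_eq] using this
    · funext x; simp

/-! ### Replacing a vertex by a path of odd order -/

/-- Partner of `i ≠ 0` on the path `0, …, 2s` when `0` is matched outside the path: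
the pairs are `(1, 2), (3, 4), …`. The value at `0` is irrelevant. -/
def partnerA (s : ℕ) (i : Fin (2 * s + 1)) : Fin (2 * s + 1) :=
  if (i : ℕ) % 2 = 1 then ⟨min (i + 1) (2 * s), by omega⟩ else ⟨i - 1, by omega⟩

/-- Partner of `i ≠ 2s` on the path `0, …, 2s` when `2s` is matched outside the path:
the pairs are `(0, 1), (2, 3), …`. The value at `2s` is irrelevant. -/
def partnerB (s : ℕ) (i : Fin (2 * s + 1)) : Fin (2 * s + 1) :=
  if (i : ℕ) % 2 = 0 then ⟨min (i + 1) (2 * s), by omega⟩ else ⟨i - 1, by omega⟩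

theorem partnerA_val (s : ℕ) (i : Fin (2 * s + 1)) :
    ((partnerA s i : Fin _) : ℕ) = if (i : ℕ) % 2 = 1 then (i : ℕ) + 1 else i - 1 := by
  unfold partnerA; split_ifs <;> simp; omega

theorem partnerB_val (s : ℕ) (i : Fin (2 * s + 1)) (hi : (i : ℕ) ≠ 2 * s) :
    ((partnerB s i : Fin _) : ℕ) = if (i : ℕ) % 2 = 0 then (i : ℕ) + 1 else i - 1 := by
  unfold partnerB; split_ifs <;> simp; omega

/-- `H'` arises from `H` by replacing the vertex `none` by a path on `Fin (2s + 1)`; the neighbours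
of `none` in the class `A` are attached to the start of the path, those in `B` to its end. -/
structure IsPathExpansion {W : Type*} (s : ℕ) (A B : W → Prop) (H : SimpleGraph (Option W))
    (H' : SimpleGraph (W ⊕ Fin (2 * s + 1))) : Prop where
  old : ∀ x y, H'.Adj (.inl x) (.inl y) ↔ H.Adj (some x) (some y)
  none : ∀ x, H.Adj none (some x) ↔ A x ∨ B x
  mixed : ∀ x i, H'.Adj (.inl x) (.inr i) ↔ (A x ∧ (i : ℕ) = 0) ∨ (B x ∧ (i : ℕ) = 2 * s)
  path : ∀ i j, H'.Adj (.inr i) (.inr j) ↔ (i : ℕ) + 1 = j ∨ (j : ℕ) + 1 = i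
  disj : ∀ x, A x → ¬ B x

section
variable {W : Type*} {s : ℕ} {A B : W → Prop} {H : SimpleGraph (Option W)}
  {H' : SimpleGraph (W ⊕ Fin (2 * s + 1))}

/-- The matching along the path is forced once it is known which end is matched outside. -/
theorem mates_structure (h : IsPathExpansion s A B H H') {f : W ⊕ Fin (2 * s + 1) → _}
    (hf : f ∈ mates H') :
    (∃ w, A w ∧ f (.inr 0) = .inl w ∧ ∀ i : Fin (2 * s + 1), (i : ℕ) ≠ 0 →
      f (.inr i) = .inr (partnerA s i)) ∨
    (∃ w, B w ∧ f (.inr (Fin.last _)) = .inl w ∧ ∀ i : Fin (2 * s + 1), (i : ℕ) ≠ 2 * s →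
      f (.inr i) = .inr (partnerB s i)) := by
  have hin : ∀ i w, f (.inr i) = .inl w → (A w ∧ (i : ℕ) = 0) ∨ (B w ∧ (i : ℕ) = 2 * s) := by
    intro i w hw
    have := (hf (.inr i)).1
    rw [hw] at this
    exact (h.mixed _ _).1 this.symm
  have hpa : ∀ i j, f (.inr i) = .inr j → (i : ℕ) + 1 = j ∨ (j : ℕ) + 1 = i := by
    intro i j hw
    have := (hf (.inr i)).1
    rw [hw] at this
    exact (h.path _ _).1 this
  have hsym : ∀ i j, f (.inr i) = .inr j → f (.inr j) = .inr i := by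
    intro i j hw
    have := (hf (.inr i)).2
    rwa [hw] at this
  by_cases h0 : ∃ w, A w ∧ f (.inr 0) = .inl w
  · left
    obtain ⟨w, hw, hfw⟩ := h0
    refine ⟨w, hw, hfw, ?_⟩
    have key : ∀ n, ∀ i j : Fin (2 * s + 1), (i : ℕ) = 2 * n + 1 → (j : ℕ) = 2 * n + 2 →
        f (.inr i) = .inr j := by
      intro n
      induction n with
      | zero =>
        intro i j hi hj
        rcases hk : f (.inr i) with x | k
        · rcases hin _ _ hk with h1 | h1 <;> omega
        · have := hpa _ _ hk
          by_cases hk0 : (k : ℕ) = 0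
          · have e : k = 0 := Fin.ext hk0
            subst e
            rw [hsym _ _ hk] at hfw
            cases hfw
          · congr 1; apply Fin.ext; omega
      | succ n ih =>
        intro i j hi hj
        rcases hk : f (.inr i) with x | k
        · rcases hin _ _ hk with h1 | h1 <;> omega
        · have := hpa _ _ hk
          by_cases hk0 : (k : ℕ) = 2 * n + 2
          · have h2 := hsym _ _ (ih ⟨2 * n + 1, by omega⟩ k rfl hk0)
            rw [hsym _ _ hk, Sum.inr.injEq, Fin.ext_iff] at h2
            simp at h2; omega
          · congr 1; apply Fin.ext; omega
    intro i hi
    have hv := partnerA_val s i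
    split_ifs at hv with hodd
    · exact key (i / 2) i _ (by omega) (by omega)
    · exact hsym _ _ (key (i / 2 - 1) _ i (by omega) (by omega))
  · right
    have key : ∀ n, ∀ i j : Fin (2 * s + 1), (i : ℕ) = 2 * n → (j : ℕ) = 2 * n + 1 →
        f (.inr i) = .inr j := by
      intro n
      induction n with
      | zero =>
        intro i j hi hj
        have e : i = 0 := Fin.ext hi
        subst e
        rcases hk : f (.inr 0) with x | k
        · rcases hin _ _ hk with h1 | h1
          · exact absurd ⟨x, h1.1, hk⟩ h0
          · omega
        · have := hpa _ _ hk
          congr 1; apply Fin.ext; omega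
      | succ n ih =>
        intro i j hi hj
        rcases hk : f (.inr i) with x | k
        · rcases hin _ _ hk with h1 | h1 <;> omega
        · have := hpa _ _ hk
          by_cases hk0 : (k : ℕ) = 2 * n + 1
          · have h2 := hsym _ _ (ih ⟨2 * n, by omega⟩ k rfl hk0)
            rw [hsym _ _ hk, Sum.inr.injEq, Fin.ext_iff] at h2
            simp at h2; omega
          · congr 1; apply Fin.ext; omega
    have hpB : ∀ i : Fin (2 * s + 1), (i : ℕ) ≠ 2 * s → f (.inr i) = .inr (partnerB s i) := by
      intro i hi
      have hv := partnerB_val s i hi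
      split_ifs at hv with hodd
      · exact key (i / 2) i _ (by omega) (by omega)
      · exact hsym _ _ (key (i / 2) _ i (by omega) (by omega))
    rcases hk : f (.inr (Fin.last _)) with x | k
    · refine ⟨x, ?_, rfl, hpB⟩
      rcases hin _ _ hk with h1 | h1
      · have e : Fin.last (2 * s) = 0 := Fin.ext h1.2
        exact absurd ⟨x, h1.1, e ▸ hk⟩ h0
      · exact h1.1
    · have h1 := hpa _ _ hk
      have h2 := hsym _ _ hk
      simp only [Fin.val_last] at h1
      have hk' : (k : ℕ) ≠ 2 * s := by omega
      rw [hpB k hk', Sum.inr.injEq, Fin.ext_iff, partnerB_val s k hk', Fin.val_last] at h2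
      split_ifs at h2 <;> omega

/-- Contraction of the path to the single vertex `none`, on partner functions: the partner of `none`
is the outside partner of whichever end of the path has one. -/
def contractMate (s : ℕ) (f : W ⊕ Fin (2 * s + 1) → W ⊕ Fin (2 * s + 1)) : Option W → Option W
  | none => (f (.inr 0)).elim some fun _ => (f (.inr (Fin.last _))).elim some fun _ => none
  | some w => (f (.inl w)).elim some fun _ => none

open Classical in
/-- Expansion of the vertex `none` to a path, on partner functions; the class of the partner of
`none` decides which end of the path is matched outside. The value `.inr i` for `f none = none`
does not occur for matchings. -/
noncomputable def expandMate (s : ℕ) (A : W → Prop) (f : Option W → Option W) :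
    W ⊕ Fin (2 * s + 1) → W ⊕ Fin (2 * s + 1)
  | .inl w => (f (some w)).elim (if A w then .inr 0 else .inr (Fin.last _)) .inl
  | .inr i => (f none).elim (.inr i) fun w =>
      if A w then (if (i : ℕ) = 0 then .inl w else .inr (partnerA s i))
      else (if (i : ℕ) = 2 * s then .inl w else .inr (partnerB s i))


/-- Normal form of a matching of the expanded graph: `w` is the unique outside vertex matched into
the path, `e` the end of the path it is matched to, and `p` the forced matching along the path. -/
theorem mates_normalForm (h : IsPathExpansion s A B H H') {f : W ⊕ Fin (2 * s + 1) → _}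
    (hf : f ∈ mates H') :
    ∃ w e p, ((A w ∧ e = 0 ∧ p = partnerA s) ∨ (B w ∧ e = Fin.last _ ∧ p = partnerB s)) ∧
      f (.inr e) = .inl w ∧ (∀ i, i ≠ e → f (.inr i) = .inr (p i)) ∧ f (.inl w) = .inr e ∧
      ∀ x, x ≠ w → ∃ y, f (.inl x) = .inl y := by
  have hmain : ∃ w e p, ((A w ∧ e = 0 ∧ p = partnerA s) ∨
      (B w ∧ e = Fin.last _ ∧ p = partnerB s)) ∧
      f (.inr e) = .inl w ∧ (∀ i, i ≠ e → f (.inr i) = .inr (p i)) := by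
    rcases mates_structure h hf with ⟨w, hw, h1, h2⟩ | ⟨w, hw, h1, h2⟩
    · exact ⟨w, _, _, .inl ⟨hw, rfl, rfl⟩, h1, fun i hi => h2 i fun h => hi (Fin.ext h)⟩
    · exact ⟨w, _, _, .inr ⟨hw, rfl, rfl⟩, h1, fun i hi => h2 i fun h => hi (Fin.ext h)⟩
  obtain ⟨w, e, p, hc, h1, h2⟩ := hmain
  refine ⟨w, e, p, hc, h1, h2, ?_, fun x hx => ?_⟩
  · rw [← h1, (hf _).2]
  · rcases hk : f (.inl x) with y | i
    · exact ⟨y, rfl⟩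
    · have h3 : f (.inr i) = .inl x := by rw [← hk, (hf _).2]
      by_cases hi : i = e
      · subst hi
        rw [h1] at h3
        exact absurd (Sum.inl.inj h3).symm hx
      · rw [h2 i hi] at h3
        cases h3

theorem contractMate_none {f : W ⊕ Fin (2 * s + 1) → W ⊕ Fin (2 * s + 1)} {w : W}
    {e : Fin (2 * s + 1)} {p : Fin (2 * s + 1) → Fin (2 * s + 1)}
    (he : e = 0 ∨ e = Fin.last _) (h1 : f (.inr e) = .inl w)
    (h2 : ∀ i, i ≠ e → f (.inr i) = .inr (p i)) : contractMate s f none = some w := by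
  by_cases h0 : 0 = e
  · subst h0
    simp [contractMate, h1]
  · obtain rfl : e = Fin.last _ := he.resolve_left (Ne.symm h0)
    simp [contractMate, h2 _ h0, h1]

theorem contractMate_mem (h : IsPathExpansion s A B H H') {f : W ⊕ Fin (2 * s + 1) → _}
    (hf : f ∈ mates H') : contractMate s f ∈ mates H := by
  obtain ⟨w, e, p, hc, h1, h2, h3, h4⟩ := mates_normalForm h hf
  have hnone : contractMate s f none = some w :=
    contractMate_none (hc.imp (·.2.1) (·.2.1)) h1 h2
  have hw : contractMate s f (some w) = none := by simp [contractMate, h3]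
  have hadj : H.Adj none (some w) := (h.none w).2 (hc.imp (·.1) (·.1))
  rintro (_ | x)
  · rw [hnone]
    exact ⟨hadj, hw⟩
  · by_cases hx : x = w
    · subst hx
      rw [hw]
      exact ⟨hadj.symm, hnone⟩
    · obtain ⟨y, hy⟩ := h4 x hx
      have h5 := hf (.inl x)
      rw [hy] at h5
      have h6 : contractMate s f (some x) = some y := by simp [contractMate, hy]
      rw [h6]
      exact ⟨(h.old _ _).1 h5.1, by simp [contractMate, h5.2]⟩

theorem expandMate_contractMate (h : IsPathExpansion s A B H H')
    {f : W ⊕ Fin (2 * s + 1) → _} (hf : f ∈ mates H') :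
    expandMate s A (contractMate s f) = f := by
  obtain ⟨w, e, p, hc, h1, h2, h3, h4⟩ := mates_normalForm h hf
  have hnone : contractMate s f none = some w :=
    contractMate_none (hc.imp (·.2.1) (·.2.1)) h1 h2
  funext x
  rcases x with x | i
  · by_cases hx : x = w
    · subst hx
      rw [h3]
      rcases hc with ⟨hA, rfl, rfl⟩ | ⟨hB, rfl, rfl⟩
      · simp [expandMate, contractMate, h3, hA]
      · simp [expandMate, contractMate, h3, show ¬ A x from fun hA => h.disj x hA hB]
    · obtain ⟨y, hy⟩ := h4 x hx
      simp [expandMate, contractMate, hy]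
  · by_cases hi : i = e
    · subst hi
      rcases hc with ⟨hA, rfl, rfl⟩ | ⟨hB, rfl, rfl⟩
      · simp [expandMate, hnone, h1, hA]
      · simp [expandMate, hnone, h1, show ¬ A w from fun hA => h.disj w hA hB]
    · rw [h2 i hi]
      rcases hc with ⟨hA, rfl, rfl⟩ | ⟨hB, rfl, rfl⟩
      · have : (i : ℕ) ≠ 0 := fun h => hi (Fin.ext h)
        simp [expandMate, hnone, hA, hi]
      · have : (i : ℕ) ≠ 2 * s := fun h => hi (Fin.ext h)
        simp [expandMate, hnone, this, show ¬ A w from fun hA => h.disj w hA hB]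

theorem mates_none {g : Option W → Option W} (hg : g ∈ mates H) :
    ∃ w, g none = some w ∧ g (some w) = none ∧ ∀ x, x ≠ w → ∃ y, g (some x) = some y := by
  rcases hn : g none with _ | w
  · have := (hg none).1
    rw [hn] at this
    exact absurd this H.irrefl
  · have hw : g (some w) = none := by rw [← hn, (hg _).2]
    refine ⟨w, rfl, hw, fun x hx => ?_⟩
    rcases hk : g (some x) with _ | y
    · have h5 := (hg (some x)).2
      rw [hk, hn] at h5
      exact absurd (Option.some.inj h5).symm hx
    · exact ⟨y, rfl⟩

theorem partnerA_spec (i : Fin (2 * s + 1)) (hi : (i : ℕ) ≠ 0) :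
    ((i : ℕ) + 1 = partnerA s i ∨ (partnerA s i : ℕ) + 1 = i) ∧
      (partnerA s i : ℕ) ≠ 0 ∧ partnerA s (partnerA s i) = i := by
  have h1 := partnerA_val s i
  have h2 := partnerA_val s (partnerA s i)
  refine ⟨?_, ?_, Fin.ext ?_⟩ <;> split_ifs at h1 h2 <;> omega

theorem partnerB_spec (i : Fin (2 * s + 1)) (hi : (i : ℕ) ≠ 2 * s) :
    ((i : ℕ) + 1 = partnerB s i ∨ (partnerB s i : ℕ) + 1 = i) ∧
      (partnerB s i : ℕ) ≠ 2 * s ∧ partnerB s (partnerB s i) = i := by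
  have h1 := partnerB_val s i hi
  have h3 : (partnerB s i : ℕ) ≠ 2 * s := by split_ifs at h1 <;> omega
  have h2 := partnerB_val s (partnerB s i) h3
  refine ⟨?_, h3, Fin.ext ?_⟩ <;> split_ifs at h1 h2 <;> omega

theorem expandMate_mem (h : IsPathExpansion s A B H H') {g : Option W → Option W}
    (hg : g ∈ mates H) : expandMate s A g ∈ mates H' := by
  obtain ⟨w, hn, hw, ho⟩ := mates_none hg
  have hAB : A w ∨ B w := by
    have := (hg none).1
    rw [hn] at this
    exact (h.none w).1 this
  rintro (x | i)
  · by_cases hx : x = w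
    · subst hx
      by_cases hA : A x
      · have h1 : expandMate s A g (.inl x) = .inr 0 := by simp [expandMate, hw, hA]
        rw [h1]
        exact ⟨(h.mixed _ _).2 (.inl ⟨hA, rfl⟩), by simp [expandMate, hn, hA]⟩
      · have h1 : expandMate s A g (.inl x) = .inr (Fin.last _) := by
          simp [expandMate, hw, hA]
        rw [h1]
        exact ⟨(h.mixed _ _).2 (.inr ⟨hAB.resolve_left hA, rfl⟩), by simp [expandMate, hn, hA]⟩
    · obtain ⟨y, hy⟩ := ho x hx
      have h1 : expandMate s A g (.inl x) = .inl y := by simp [expandMate, hy]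
      have h2 := hg (some x)
      rw [hy] at h2
      rw [h1]
      exact ⟨(h.old _ _).2 h2.1, by simp [expandMate, h2.2]⟩
  · by_cases hA : A w
    · by_cases hi : (i : ℕ) = 0
      · obtain rfl : i = 0 := Fin.ext hi
        have h1 : expandMate s A g (.inr 0) = .inl w := by simp [expandMate, hn, hA]
        rw [h1]
        exact ⟨((h.mixed _ _).2 (.inl ⟨hA, rfl⟩)).symm, by simp [expandMate, hw, hA]⟩
      · have h1 : ∀ i : Fin (2 * s + 1), (i : ℕ) ≠ 0 →
            expandMate s A g (.inr i) = .inr (partnerA s i) := by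
          intro i hi
          simp only [expandMate, hn, hA, hi, Option.elim_some, if_true, if_false]
        obtain ⟨h2, h3, h4⟩ := partnerA_spec i hi
        rw [h1 i hi, h1 _ h3, h4]
        exact ⟨(h.path _ _).2 h2, rfl⟩
    · by_cases hi : (i : ℕ) = 2 * s
      · obtain rfl : i = Fin.last _ := Fin.ext hi
        have h1 : expandMate s A g (.inr (Fin.last _)) = .inl w := by
          simp [expandMate, hn, hA]
        rw [h1]
        exact ⟨((h.mixed _ _).2 (.inr ⟨hAB.resolve_left hA, rfl⟩)).symm,
          by simp [expandMate, hw, hA]⟩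
      · have h1 : ∀ i : Fin (2 * s + 1), (i : ℕ) ≠ 2 * s →
            expandMate s A g (.inr i) = .inr (partnerB s i) := by
          intro i hi
          simp only [expandMate, hn, hA, hi, Option.elim_some, if_false]
        obtain ⟨h2, h3, h4⟩ := partnerB_spec i hi
        rw [h1 i hi, h1 _ h3, h4]
        exact ⟨(h.path _ _).2 h2, rfl⟩

theorem contractMate_expandMate {g : Option W → Option W} (hg : g ∈ mates H) :
    contractMate s (expandMate s A g) = g := by
  obtain ⟨w, hn, hw, ho⟩ := mates_none hg
  funext x
  rcases x with _ | x
  · rw [hn]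
    by_cases hA : A w
    · simp [contractMate, expandMate, hn, hA]
    · by_cases hs : s = 0
      · subst hs
        simp [contractMate, expandMate, hn]
      · simp [contractMate, expandMate, hn, hA, hs, eq_comm (a := 0)]
  · by_cases hx : x = w
    · subst hx
      by_cases hA : A x <;> simp [contractMate, expandMate, hw, hA]
    · obtain ⟨y, hy⟩ := ho x hx
      simp [contractMate, expandMate, hy]

/-- Replacing a vertex by a path with an odd number of vertices, with the two classes of its
neighbours attached to the two ends, preserves the number of perfect matchings. -/
theorem ncard_mates_path (h : IsPathExpansion s A B H H') :
    (mates H').ncard = (mates H).ncard :=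
  Set.ncard_congr (fun f _ => contractMate s f) (fun _ hf => contractMate_mem h hf)
    (fun f g hf hg hfg => by
      rw [← expandMate_contractMate h hf, ← expandMate_contractMate h hg]
      exact congrArg _ hfg)
    (fun g hg => ⟨expandMate s A g, expandMate_mem h hg, contractMate_expandMate hg⟩)

end

/-! ### The line graph of a subdivided graph -/

section
variable {V : Type*}

/-- The `n`-th vertex of the path `u, w₀, …, w_{k-1}, v` replacing the edge `(u, v)`, for
`n ≤ k + 1`. -/
def pathVertex (u v : V) (k n : ℕ) : V ⊕ Fin k :=
  if n = 0 then .inl u else if h : n - 1 < k then .inr ⟨n - 1, h⟩ else .inl v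

theorem pathVertex_eq_inl {u v : V} {k n : ℕ} (hn : n ≤ k + 1) {x : V} :
    pathVertex u v k n = .inl x ↔ (n = 0 ∧ u = x) ∨ (n = k + 1 ∧ v = x) := by
  unfold pathVertex
  split_ifs with h1 h2
  · subst h1; simp
  · simp only [false_iff]; omega
  · have : n = k + 1 := by omega
    simp [this]

theorem pathVertex_eq_inr {u v : V} {k n : ℕ} {i : Fin k} :
    pathVertex u v k n = .inr i ↔ n = i + 1 := by
  unfold pathVertex
  have := i.2
  split_ifs with h1 h2
  · simp [h1]
  · simp only [Sum.inr.injEq, Fin.ext_iff]; omega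
  · simp only [false_iff]; omega

theorem pathVertex_inj {u v : V} (huv : u ≠ v) {k m n : ℕ} (hm : m ≤ k + 1) (hn : n ≤ k + 1) :
    pathVertex u v k m = pathVertex u v k n ↔ m = n := by
  refine ⟨fun h => ?_, fun h => h ▸ rfl⟩
  rcases hx : pathVertex u v k n with x | i
  · rw [hx] at h
    rw [pathVertex_eq_inl hn] at hx
    rw [pathVertex_eq_inl hm] at h
    rcases h with ⟨h1, h2⟩ | ⟨h1, h2⟩ <;> rcases hx with ⟨h3, h4⟩ | ⟨h3, h4⟩
    · omega
    · exact absurd (h2.trans h4.symm) huv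
    · exact absurd (h4.trans h2.symm) huv
    · omega
  · rw [hx] at h
    rw [pathVertex_eq_inr] at hx h
    omega

variable {G : SimpleGraph V} {u v : V}

theorem map_inl_mem_edgeSet_subdivideEdge {k : ℕ} {e : Sym2 V} (he : e ∈ G.edgeSet)
    (hne : e ≠ s(u, v)) : e.map Sum.inl ∈ (subdivideEdge G u v k).edgeSet := by
  induction e with
  | h x y =>
    rw [mem_edgeSet] at he
    simp only [Sym2.map_mk, mem_edgeSet, subdivideEdge, fromRel_adj]
    exact ⟨by simpa using he.ne, .inl (.inl ⟨x, y, rfl, rfl, he, .inl hne⟩)⟩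

theorem pathEdge_mem_edgeSet_subdivideEdge (huv : G.Adj u v) {k n : ℕ} (hn : n ≤ k) :
    s(pathVertex u v k n, pathVertex u v k (n + 1)) ∈ (subdivideEdge G u v k).edgeSet := by
  rw [mem_edgeSet, subdivideEdge, fromRel_adj]
  refine ⟨fun h => by simpa using (pathVertex_inj huv.ne (by omega) (by omega)).1 h, ?_⟩
  by_cases h0 : n = 0
  · have h1 : pathVertex u v k n = .inl u := (pathVertex_eq_inl (by omega)).2 (.inl ⟨h0, rfl⟩)
    by_cases hk : k = 0
    · have h2 : pathVertex u v k (n + 1) = .inl v :=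
        (pathVertex_eq_inl (by omega)).2 (.inr ⟨by omega, rfl⟩)
      exact .inl (.inl ⟨u, v, h1, h2, huv, .inr hk⟩)
    · exact .inl (.inr (.inl ⟨⟨0, by omega⟩, h1, pathVertex_eq_inr.2 (by simpa using h0), rfl⟩))
  · have h1 : pathVertex u v k n = .inr ⟨n - 1, by omega⟩ :=
      pathVertex_eq_inr.2 (by simp; omega)
    by_cases hk : n = k
    · have h2 : pathVertex u v k (n + 1) = .inl v :=
        (pathVertex_eq_inl (by omega)).2 (.inr ⟨by omega, rfl⟩)
      exact .inr (.inr (.inr (.inl ⟨_, h2, h1, by simp [hk]⟩)))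
    · have h2 : pathVertex u v k (n + 1) = .inr ⟨n, by omega⟩ := pathVertex_eq_inr.2 rfl
      exact .inl (.inr (.inr (.inr ⟨_, _, h1, h2, by simp; omega⟩)))

theorem mem_edgeSet_subdivideEdge {k : ℕ} {e : Sym2 (V ⊕ Fin k)}
    (he : e ∈ (subdivideEdge G u v k).edgeSet) :
    (∃ e₀ ∈ G.edgeSet, e₀ ≠ s(u, v) ∧ e₀.map Sum.inl = e) ∨
      ∃ n ≤ k, s(pathVertex u v k n, pathVertex u v k (n + 1)) = e := by
  have key : ∀ a b : V ⊕ Fin k,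
      ((∃ x y : V, a = Sum.inl x ∧ b = Sum.inl y ∧ G.Adj x y ∧ (s(x, y) ≠ s(u, v) ∨ k = 0)) ∨
      (∃ i : Fin k, a = Sum.inl u ∧ b = Sum.inr i ∧ (i : ℕ) = 0) ∨
      (∃ i : Fin k, a = Sum.inl v ∧ b = Sum.inr i ∧ (i : ℕ) = k - 1) ∨
      (∃ i j : Fin k, a = Sum.inr i ∧ b = Sum.inr j ∧ (j : ℕ) = (i : ℕ) + 1)) →
      (∃ e₀ ∈ G.edgeSet, e₀ ≠ s(u, v) ∧ e₀.map Sum.inl = s(a, b)) ∨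
      ∃ n ≤ k, s(pathVertex u v k n, pathVertex u v k (n + 1)) = s(a, b) := by
    rintro a b (⟨x, y, rfl, rfl, hxy, hk⟩ | ⟨i, rfl, rfl, hi⟩ | ⟨i, rfl, rfl, hi⟩ |
      ⟨i, j, rfl, rfl, hij⟩)
    · by_cases hne : s(x, y) = s(u, v)
      · right
        obtain rfl : k = 0 := hk.resolve_left (not_not.2 hne)
        refine ⟨0, le_rfl, ?_⟩
        have : s(pathVertex u v 0 0, pathVertex u v 0 (0 + 1)) =
            (s(u, v)).map (Sum.inl : V → V ⊕ Fin 0) := rfl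
        rw [this, ← hne]; rfl
      · exact .inl ⟨s(x, y), hxy, hne, rfl⟩
    · right
      refine ⟨0, by omega, ?_⟩
      rw [(pathVertex_eq_inl (by omega)).2 (.inl ⟨rfl, rfl⟩),
        (pathVertex_eq_inr (i := i)).2 (by omega)]
    · right
      have := i.2
      refine ⟨k, le_rfl, ?_⟩
      rw [(pathVertex_eq_inl le_rfl).2 (.inr ⟨rfl, rfl⟩),
        (pathVertex_eq_inr (i := i)).2 (by omega), Sym2.eq_swap]
    · right
      have := j.2
      refine ⟨j, by omega, ?_⟩
      rw [(pathVertex_eq_inr (i := i)).2 (by omega), (pathVertex_eq_inr (i := j)).2 rfl]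
  induction e with
  | h a b =>
    rw [mem_edgeSet, subdivideEdge, fromRel_adj] at he
    rcases he.2 with h | h
    · exact key a b h
    · rw [Sym2.eq_swap (a := a)]
      exact key b a h

/-- The edges of `G` other than `s(u, v)`. -/
abbrev OtherEdge (G : SimpleGraph V) (u v : V) : Type _ :=
  {e : Sym2 V // e ∈ G.edgeSet ∧ e ≠ s(u, v)}

/-- The edges of `G`, with `s(u, v)` singled out as `none`. -/
noncomputable def edgeEquiv (huv : G.Adj u v) : Option (OtherEdge G u v) ≃ G.edgeSet :=
  Equiv.ofBijective (fun o => o.elim ⟨s(u, v), huv⟩ fun e => ⟨e.1, e.2.1⟩) <| by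
    refine ⟨?_, ?_⟩
    · rintro (_ | ⟨e, he⟩) (_ | ⟨e', he'⟩) h
      · rfl
      · exact absurd (congrArg Subtype.val h).symm he'.2
      · exact absurd (congrArg Subtype.val h) he.2
      · have h : e = e' := congrArg Subtype.val h
        subst h; rfl
    · rintro ⟨e, he⟩
      by_cases h : e = s(u, v)
      · subst h; exact ⟨none, rfl⟩
      · exact ⟨some ⟨e, he, h⟩, rfl⟩

theorem pathVertex_mem_map_inl {k n : ℕ} (hn : n ≤ k + 1) {e : Sym2 V} :
    pathVertex u v k n ∈ e.map (Sum.inl : V → V ⊕ Fin k) ↔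
      (n = 0 ∧ u ∈ e) ∨ (n = k + 1 ∧ v ∈ e) := by
  rw [Sym2.mem_map]
  constructor
  · rintro ⟨x, hx, h⟩
    rcases (pathVertex_eq_inl hn).1 h.symm with ⟨h1, rfl⟩ | ⟨h1, rfl⟩
    · exact .inl ⟨h1, hx⟩
    · exact .inr ⟨h1, hx⟩
  · rintro (⟨h1, h2⟩ | ⟨h1, h2⟩)
    · exact ⟨u, h2, ((pathVertex_eq_inl hn).2 (.inl ⟨h1, rfl⟩)).symm⟩
    · exact ⟨v, h2, ((pathVertex_eq_inl hn).2 (.inr ⟨h1, rfl⟩)).symm⟩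

theorem not_mem_and_mem (huv : G.Adj u v) (e : OtherEdge G u v) (h1 : u ∈ e.1) : v ∉ e.1 :=
  fun h2 => e.2.2 ((Sym2.mem_and_mem_iff huv.ne).1 ⟨h1, h2⟩)

/-- The edges of the subdivided graph: the edges of `G` other than `s(u, v)`, and the `k + 1`
edges of the path. -/
noncomputable def subdivideEdgeEquiv (huv : G.Adj u v) (k : ℕ) :
    OtherEdge G u v ⊕ Fin (k + 1) ≃ (subdivideEdge G u v k).edgeSet :=
  Equiv.ofBijective (Sum.elim
      (fun e => ⟨e.1.map Sum.inl, map_inl_mem_edgeSet_subdivideEdge e.2.1 e.2.2⟩)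
      (fun i => ⟨s(pathVertex u v k i, pathVertex u v k (i + 1)),
        pathEdge_mem_edgeSet_subdivideEdge huv (Nat.lt_succ_iff.1 i.2)⟩)) <| by
    have hmix : ∀ (e : OtherEdge G u v) (i : Fin (k + 1)), e.1.map Sum.inl ≠
        s(pathVertex u v k i, pathVertex u v k (i + 1)) := by
      intro e i h
      have hi := i.2
      have h1 : pathVertex u v k i ∈ e.1.map (Sum.inl : V → V ⊕ Fin k) := h ▸ Sym2.mem_mk_left _ _
      have h2 : pathVertex u v k (i + 1) ∈ e.1.map (Sum.inl : V → V ⊕ Fin k) :=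
        h ▸ Sym2.mem_mk_right _ _
      rw [pathVertex_mem_map_inl (by omega)] at h1 h2
      rcases h1 with ⟨h1, h3⟩ | ⟨h1, h3⟩
      · rcases h2 with ⟨h2, h4⟩ | ⟨h2, h4⟩
        · omega
        · exact not_mem_and_mem huv e h3 h4
      · omega
    refine ⟨?_, ?_⟩
    · rintro (e | i) (e' | j) h <;> have h := congrArg Subtype.val h
      · exact congrArg _ (Subtype.ext (Sym2.map.injective Sum.inl_injective h))
      · exact absurd h (hmix e j)
      · exact absurd h.symm (hmix e' i)
      · have hi := i.2
        have hj := j.2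
        simp only [Sum.elim_inr, Sym2.eq_iff] at h
        rw [pathVertex_inj huv.ne (by omega) (by omega),
          pathVertex_inj huv.ne (by omega) (by omega),
          pathVertex_inj huv.ne (by omega) (by omega),
          pathVertex_inj huv.ne (by omega) (by omega)] at h
        exact congrArg _ (Fin.ext (by omega))
    · rintro ⟨e, he⟩
      rcases mem_edgeSet_subdivideEdge he with ⟨e₀, h1, h2, rfl⟩ | ⟨n, hn, rfl⟩
      · exact ⟨.inl ⟨e₀, h1, h2⟩, rfl⟩
      · exact ⟨.inr ⟨n, Nat.lt_succ_iff.2 hn⟩, rfl⟩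

theorem isPathExpansion_lineGraph (huv : G.Adj u v) (s : ℕ) :
    IsPathExpansion s (fun e : OtherEdge G u v => u ∈ e.1) (fun e => v ∈ e.1)
      (G.lineGraph.comap (edgeEquiv huv))
      ((subdivideEdge G u v (2 * s)).lineGraph.comap (subdivideEdgeEquiv huv (2 * s))) where
  old x y := by
    simp only [comap_adj, lineGraph_adj_iff_exists, ne_eq, EmbeddingLike.apply_eq_iff_eq,
      Sum.inl.injEq, Option.some.injEq]
    refine and_congr_right fun _ => ?_
    change (∃ z, z ∈ x.1.map Sum.inl ∧ z ∈ y.1.map Sum.inl) ↔ ∃ z, z ∈ x.1 ∧ z ∈ y.1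
    simp only [Sym2.mem_map]
    constructor
    · rintro ⟨_, ⟨a, ha, rfl⟩, b, hb, hab⟩
      obtain rfl := Sum.inl_injective hab
      exact ⟨_, ha, hb⟩
    · rintro ⟨a, ha, hb⟩
      exact ⟨_, ⟨a, ha, rfl⟩, a, hb, rfl⟩
  none x := by
    simp only [comap_adj, lineGraph_adj_iff_exists, ne_eq, EmbeddingLike.apply_eq_iff_eq,
      reduceCtorEq, not_false_eq_true, true_and]
    change (∃ z, z ∈ s(u, v) ∧ z ∈ x.1) ↔ _
    simp
  mixed x i := by
    have hi := i.2
    simp only [comap_adj, lineGraph_adj_iff_exists, ne_eq, EmbeddingLike.apply_eq_iff_eq,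
      reduceCtorEq, not_false_eq_true, true_and]
    change (∃ z, z ∈ x.1.map Sum.inl ∧
      z ∈ s(pathVertex u v (2 * s) i, pathVertex u v (2 * s) (i + 1))) ↔ _
    simp only [Sym2.mem_iff, and_or_left, exists_or, exists_eq_right]
    rw [pathVertex_mem_map_inl (by omega), pathVertex_mem_map_inl (by omega)]
    constructor
    · rintro ((h | h) | (h | h))
      · exact .inl h.symm
      · omega
      · omega
      · exact .inr ⟨h.2, by omega⟩
    · rintro (h | h)
      · exact .inl (.inl h.symm)
      · exact .inr (.inr ⟨by omega, h.1⟩)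
  path i j := by
    have hi := i.2
    have hj := j.2
    simp only [comap_adj, lineGraph_adj_iff_exists, ne_eq, EmbeddingLike.apply_eq_iff_eq,
      Sum.inr.injEq]
    change (_ ∧ ∃ z, z ∈ s(pathVertex u v (2 * s) i, pathVertex u v (2 * s) (i + 1)) ∧
      z ∈ s(pathVertex u v (2 * s) j, pathVertex u v (2 * s) (j + 1))) ↔ _
    simp only [Sym2.mem_iff, and_or_left, exists_or, exists_eq_right]
    rw [pathVertex_inj huv.ne (by omega) (by omega),
      pathVertex_inj huv.ne (by omega) (by omega),
      pathVertex_inj huv.ne (by omega) (by omega),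
      pathVertex_inj huv.ne (by omega) (by omega), Fin.ext_iff]
    omega
  disj := not_mem_and_mem huv

end

/-- Let `G` be a finite connected simple graph with an even number of edges, let `(u,v)` be an
edge of `G` with both endpoints of degree at least 2, and let `s ≥ 0`.  Then the line graphs
`L(G)` and `L(G_s)`, where `G_s` is obtained from `G` by subdividing the edge `(u,v)` exactly
`2s` times, have the same number of perfect matchings. -/
theorem numPM_lineGraph_subdivideEdge_even_times
    {V : Type*} [Fintype V] [DecidableEq V] (G : SimpleGraph V) [DecidableRel G.Adj]
    (hconn : G.Connected) (heven : Even G.edgeFinset.card)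
    (u v : V) (huv : G.Adj u v)
    (hu : 2 ≤ G.degree u) (hv : 2 ≤ G.degree v) (s : ℕ) :
    numPM G.lineGraph = numPM (subdivideEdge G u v (2 * s)).lineGraph := by
  rw [numPM_eq_ncard_mates, numPM_eq_ncard_mates, ← ncard_mates_comap (edgeEquiv huv),
    ← ncard_mates_comap (subdivideEdgeEquiv huv (2 * s)),
    ncard_mates_path (isPathExpansion_lineGraph huv s)]
end
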